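/- arXiv:2310.18960 — 3 statements merged into one kernel-verified Lean document; each statement's English description precedes it below -/
import Mathlib

section
/- Let P = x + ∑_{v ∈ V} [0, v] be a zonotope in ℝ³ whose generator set V consists of pairwise linearly independent nonzero vectors spanning ℝ³, and suppose A(P,z) = λ for every nonzero z ∈ ℝ³, where λ is a constant. Then λ = 2·deg v for every v ∈ V in the hypergraph ℱ. -/
open scoped Pointwise BigOperators

noncomputable section

/-- Scalar product on `ℝ^d`. -/
def dotp {d : ℕ} (z x : Fin d → ℝ) : ℝ := ∑ i, z i * x i

/-- Number of vertices (extreme points) of a set. -/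
def nVert {d : ℕ} (S : Set (Fin d → ℝ)) : ℕ := (Set.extremePoints ℝ S).ncard

/-- `t⁻ = min {z·x : x ∈ P}`. -/
def tMin {d : ℕ} (P : Set (Fin d → ℝ)) (z : Fin d → ℝ) : ℝ := sInf (dotp z '' P)

/-- `t⁺ = max {z·x : x ∈ P}`. -/
def tMax {d : ℕ} (P : Set (Fin d → ℝ)) (z : Fin d → ℝ) : ℝ := sSup (dotp z '' P)

/-- `A(P,z)`: the average number of vertices of the sections `P ∩ {x : z·x = t}`
over `t ∈ [t⁻, t⁺]`. -/
def avgVert {d : ℕ} (P : Set (Fin d → ℝ)) (z : Fin d → ℝ) : ℝ :=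
  (tMax P z - tMin P z)⁻¹ *
    ∫ t in tMin P z..tMax P z, ((nVert (P ∩ {x | dotp z x = t}) : ℝ))

/-- A convex polytope: the convex hull of a finite point set. -/
def IsPolytope {d : ℕ} (P : Set (Fin d → ℝ)) : Prop :=
  ∃ s : Finset (Fin d → ℝ), P = convexHull ℝ (s : Set (Fin d → ℝ))

/-- The vectors are nonzero and pairwise linearly independent. -/
def PairwiseIndep {d n : ℕ} (a : Fin n → (Fin d → ℝ)) : Prop :=
  (∀ i, a i ≠ 0) ∧ ∀ i j, i ≠ j → ∀ c : ℝ, a j ≠ c • a i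

/-- A zonotope: a translate of a Minkowski sum of segments `[0, aᵢ]` with pairwise
linearly independent nonzero generators. -/
def IsZonotope {d : ℕ} (P : Set (Fin d → ℝ)) : Prop :=
  ∃ (n : ℕ) (a : Fin n → (Fin d → ℝ)) (x : Fin d → ℝ),
    PairwiseIndep a ∧ P = {x} + ∑ i, segment ℝ 0 (a i)

/-- Central symmetry: there is `c` with `2c - P = P`. -/
def CentSymm {d : ℕ} (P : Set (Fin d → ℝ)) : Prop :=
  ∃ c : Fin d → ℝ, (fun y => (2 : ℝ) • c - y) '' P = P

/-- An edge of the hypergraph `ℱ` on the generator set `V`: a subset `W ⊆ V` spanning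
a 2-dimensional subspace, maximal with this property. -/
def IsHEdge (V W : Finset (Fin 3 → ℝ)) : Prop :=
  W ⊆ V ∧ Module.finrank ℝ (Submodule.span ℝ (W : Set (Fin 3 → ℝ))) = 2 ∧
    ∀ v ∈ V, v ∉ W →
      Module.finrank ℝ (Submodule.span ℝ (insert v (W : Set (Fin 3 → ℝ)))) = 3

/-- The degree of `v` in the hypergraph `ℱ` on `V`: the number of edges containing `v`. -/
def degF (V : Finset (Fin 3 → ℝ)) (v : Fin 3 → ℝ) : ℕ :=
  {W : Finset (Fin 3 → ℝ) | IsHEdge V W ∧ v ∈ W}.ncard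

/-- The set of edges of the polytope `P` that are parallel to `v`: one-dimensional
exposed faces `[u,w]` of `P` with `w - u` a nonzero multiple of `v`. -/
def edgesParallel {d : ℕ} (P : Set (Fin d → ℝ)) (v : Fin d → ℝ) : Set (Set (Fin d → ℝ)) :=
  {e | ∃ u w : Fin d → ℝ, u ≠ w ∧ e = segment ℝ u w ∧
    (∃ y : Fin d → ℝ, y ≠ 0 ∧ e = {x ∈ P | ∀ p ∈ P, dotp y p ≤ dotp y x}) ∧
    ∃ c : ℝ, c ≠ 0 ∧ w - u = c • v}


abbrev ZE := Fin 3 → ℝ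

open Classical in
def patt (V : Finset ZE) (v : ZE) : Finset (Finset ZE) :=
  (V.erase v).powerset.filter (fun S => ∃ f : ZE →ₗ[ℝ] ℝ, f v = 0 ∧
    (∀ u ∈ S, 0 < f u) ∧ ∀ u ∈ V.erase v, u ∉ S → f u < 0)

lemma mem_patt {V : Finset ZE} {v : ZE} {S : Finset ZE} : S ∈ patt V v ↔
    S ⊆ V.erase v ∧ ∃ f : ZE →ₗ[ℝ] ℝ, f v = 0 ∧
    (∀ u ∈ S, 0 < f u) ∧ ∀ u ∈ V.erase v, u ∉ S → f u < 0 := by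
  simp [patt]

lemma finrank_ann (v : ZE) (hv : v ≠ 0) :
    Module.finrank ℝ (Submodule.span ℝ {v}).dualAnnihilator = 2 := by
  have h := Subspace.finrank_add_finrank_dualAnnihilator_eq (Submodule.span ℝ {v})
  rw [finrank_span_singleton hv] at h
  simp at h
  omega

lemma mem_ann {v : ZE} {f : ZE →ₗ[ℝ] ℝ} :
    f ∈ (Submodule.span ℝ {v}).dualAnnihilator ↔ f v = 0 := by
  rw [Submodule.mem_dualAnnihilator]
  constructor
  · intro h; exact h v (Submodule.mem_span_singleton_self v)
  · intro h w hw
    obtain ⟨c, rfl⟩ := Submodule.mem_span_singleton.1 hw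
    simp [h]

lemma exists_e1 (V : Finset ZE) (v : ZE)
    (h : ∀ u ∈ V.erase v, ∀ c : ℝ, u ≠ c • v) :
    ∃ e : ZE →ₗ[ℝ] ℝ, e v = 0 ∧ ∀ u ∈ V.erase v, e u ≠ 0 := by
  obtain ⟨e, he, h2⟩ := Module.Dual.exists_forall_mem_ne_zero_of_forall_exists
    (Submodule.span ℝ {v}).dualAnnihilator
    (fun u : (V.erase v) => Module.Dual.eval ℝ ZE (u : ZE)) (by
      rintro ⟨u, hu⟩
      by_contra hcon
      push Not at hcon
      have : u ∈ (Submodule.span ℝ {v}).dualAnnihilator.dualCoannihilator := by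
        rw [Submodule.mem_dualCoannihilator]
        intro φ hφ
        exact hcon φ hφ
      rw [Subspace.dualAnnihilator_dualCoannihilator_eq] at this
      obtain ⟨c, hc⟩ := Submodule.mem_span_singleton.1 this
      exact h u hu c hc.symm)
  exact ⟨e, mem_ann.1 he, fun u hu => h2 ⟨u, hu⟩⟩

lemma exists_e2 (v : ZE) (hv : v ≠ 0) (e1 : ZE →ₗ[ℝ] ℝ) (he : e1 v = 0) (h1 : e1 ≠ 0) :
    ∃ e2 : ZE →ₗ[ℝ] ℝ, e2 v = 0 ∧ (∀ d : ℝ, d • e1 + e2 ≠ 0) ∧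
      ∀ f : ZE →ₗ[ℝ] ℝ, f v = 0 → ∃ s r : ℝ, f = s • e1 + r • e2 := by
  let D := (Submodule.span ℝ {v}).dualAnnihilator
  have hD : Module.finrank ℝ D = 2 := finrank_ann v hv
  let x1 : D := ⟨e1, mem_ann.2 he⟩
  have hx1 : x1 ≠ 0 := by
    intro h; exact h1 (congrArg Subtype.val h)
  obtain ⟨y, hy⟩ := exists_linearIndependent_pair_of_one_lt_finrank (R := ℝ) (M := D) (by omega) hx1
  refine ⟨y.1, mem_ann.1 y.2, ?_, ?_⟩
  · intro d hd
    have := (LinearIndependent.pair_iff.1 hy) d 1 (by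
      apply Subtype.ext
      simpa [x1] using hd)
    simp at this
  · intro f hf
    have ht := hy.span_eq_top_of_card_eq_finrank' (by simp [hD])
    have hm : (⟨f, mem_ann.2 hf⟩ : D) ∈ Submodule.span ℝ (Set.range ![x1, y]) := by
      rw [ht]; trivial
    simp only [Matrix.range_cons, Matrix.range_empty, Set.union_empty, Set.singleton_union] at hm
    obtain ⟨s, r, h⟩ := Submodule.mem_span_pair.1 hm
    refine ⟨s, r, ?_⟩
    have := congrArg Subtype.val h
    simpa [x1] using this.symm

lemma pair_indep {v u : ZE} (hv : v ≠ 0) (h : ∀ c : ℝ, u ≠ c • v) :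
    Module.finrank ℝ (Submodule.span ℝ ({v, u} : Set ZE)) = 2 := by
  have : LinearIndependent ℝ ![v, u] := by
    rw [LinearIndependent.pair_iff' hv]
    intro a ha; exact h a ha.symm
  have h2 := finrank_span_eq_card this
  have hr : Set.range ![v, u] = ({v, u} : Set ZE) := by
    simp only [Matrix.range_cons, Matrix.range_empty, Set.union_empty, Set.singleton_union]
  rw [hr] at h2
  exact h2

lemma finrank_ker2 {y : ZE →ₗ[ℝ] ℝ} (hy : y ≠ 0) : Module.finrank ℝ (LinearMap.ker y) = 2 := by
  have h := y.finrank_range_add_finrank_ker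
  rw [LinearMap.range_eq_top.2 (LinearMap.surjective hy)] at h
  simp at h
  omega

lemma edge_char (V : Finset ZE) (v : ZE) (hv : v ≠ 0) (hvV : v ∈ V)
    (h : ∀ u ∈ V.erase v, ∀ c : ℝ, u ≠ c • v) (y : ZE →ₗ[ℝ] ℝ) (hy : y ≠ 0)
    (hyv : y v = 0) (u : ZE) (hu : u ∈ V.erase v) (hyu : y u = 0) (W : Finset ZE)
    (hvW : v ∈ W) (huW : u ∈ W) :
    IsHEdge V W ↔ W = V.filter (fun w => y w = 0) := by
  have hle : Submodule.span ℝ ({v, u} : Set ZE) ≤ LinearMap.ker y := by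
    rw [Submodule.span_le]
    rintro w (rfl | rfl)
    · exact hyv
    · exact hyu
  have heq : Submodule.span ℝ ({v, u} : Set ZE) = LinearMap.ker y :=
    Submodule.eq_of_le_of_finrank_eq hle (by rw [pair_indep hv (h u hu), finrank_ker2 hy])
  have hsub : LinearMap.ker y ≤ Submodule.span ℝ (W : Set ZE) := by
    rw [← heq]
    apply Submodule.span_mono
    rintro w (rfl | rfl)
    · exact hvW
    · exact huW
  constructor
  · rintro ⟨h1, h2, h3⟩
    have hs : LinearMap.ker y = Submodule.span ℝ (W : Set ZE) :=
      Submodule.eq_of_le_of_finrank_eq hsub (by rw [h2, finrank_ker2 hy])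
    ext w
    rw [Finset.mem_filter]
    constructor
    · intro hw
      refine ⟨h1 hw, ?_⟩
      have : w ∈ LinearMap.ker y := by rw [hs]; exact Submodule.subset_span hw
      exact this
    · rintro ⟨hw, hyw⟩
      by_contra hwW
      have h4 := h3 w hw hwW
      rw [Submodule.span_insert_eq_span (by rw [← hs]; exact hyw), h2] at h4
      omega
  · rintro rfl
    have hs : Submodule.span ℝ ((V.filter (fun w => y w = 0) : Finset ZE) : Set ZE)
        = LinearMap.ker y := by
      apply le_antisymm _ hsub
      rw [Submodule.span_le]
      intro w hw
      exact (Finset.mem_filter.1 hw).2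
    refine ⟨Finset.filter_subset _ _, by rw [hs, finrank_ker2 hy], ?_⟩
    intro w hw hwn
    have hyw : y w ≠ 0 := fun h0 => hwn (Finset.mem_filter.2 ⟨hw, h0⟩)
    have hlt : LinearMap.ker y < Submodule.span ℝ
        (insert w ((V.filter (fun w => y w = 0) : Finset ZE) : Set ZE)) := by
      refine lt_of_le_of_ne (by rw [← hs]; exact Submodule.span_mono (Set.subset_insert _ _)) ?_
      intro hk
      apply hyw
      have : w ∈ LinearMap.ker y := by rw [hk]; exact Submodule.subset_span (Set.mem_insert _ _)
      exact this
    have h1 := Submodule.finrank_lt_finrank_of_lt hlt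
    rw [finrank_ker2 hy] at h1
    have h2 := Submodule.finrank_le (Submodule.span ℝ
        (insert w ((V.filter (fun w => y w = 0) : Finset ZE) : Set ZE)))
    simp only [Module.finrank_fin_fun] at h2
    exact le_antisymm h2 h1

lemma deg_card (V : Finset ZE) (v : ZE) (hv : v ≠ 0) (hvV : v ∈ V)
    (h : ∀ u ∈ V.erase v, ∀ c : ℝ, u ≠ c • v) (e1 e2 : ZE →ₗ[ℝ] ℝ)
    (h1v : e1 v = 0) (h2v : e2 v = 0) (hd : ∀ d : ℝ, d • e1 + e2 ≠ 0)
    (h1 : ∀ u ∈ V.erase v, e1 u ≠ 0) :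
    degF V v = ((V.erase v).image (fun u => - e2 u / e1 u)).card := by
  have key : {W : Finset ZE | IsHEdge V W ∧ v ∈ W} =
      (fun d : ℝ => V.filter (fun w => (d • e1 + e2) w = 0)) ''
        (((V.erase v).image (fun u => - e2 u / e1 u) : Finset ℝ) : Set ℝ) := by
    ext W
    simp only [Set.mem_ofPred_eq, Set.mem_image, Finset.mem_coe, Finset.mem_image]
    have hz : ∀ u ∈ V.erase v, ((- e2 u / e1 u) • e1 + e2) u = 0 := by
      intro u hu
      have := h1 u hu
      simp
      field_simp
      ring
    constructor
    · rintro ⟨hW, hvW⟩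
      obtain ⟨u, huW, huv⟩ : ∃ u ∈ W, u ≠ v := by
        by_contra hcon
        push Not at hcon
        have : W = {v} := by
          ext w; simp only [Finset.mem_singleton]
          exact ⟨hcon w, fun h => h ▸ hvW⟩
        have h2 := hW.2.1
        rw [this] at h2
        rw [Finset.coe_singleton, finrank_span_singleton hv] at h2
        omega
      have hu : u ∈ V.erase v := Finset.mem_erase.2 ⟨huv, hW.1 huW⟩
      refine ⟨_, ⟨u, hu, rfl⟩, ?_⟩
      exact ((edge_char V v hv hvV h _ (hd _) (by simp [h1v, h2v]) u hu (hz u hu) W hvW huW).1 hW).symm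
    · rintro ⟨_, ⟨u, hu, rfl⟩, rfl⟩
      have hvm : v ∈ V.filter (fun w => ((- e2 u / e1 u) • e1 + e2) w = 0) :=
        Finset.mem_filter.2 ⟨hvV, by simp [h1v, h2v]⟩
      refine ⟨?_, hvm⟩
      exact (edge_char V v hv hvV h _ (hd _) (by simp [h1v, h2v]) u hu (hz u hu) _ hvm
        (Finset.mem_filter.2 ⟨Finset.mem_of_mem_erase hu, hz u hu⟩)).2 rfl
  unfold degF
  rw [key, Set.InjOn.ncard_image, Set.ncard_coe_finset]
  intro d hdm d' hdm' heq
  simp only [Finset.mem_coe, Finset.mem_image] at hdm hdm'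
  obtain ⟨u, hu, rfl⟩ := hdm
  have hu1 := h1 u hu
  have hm : u ∈ V.filter (fun w => ((- e2 u / e1 u) • e1 + e2) w = 0) := by
    refine Finset.mem_filter.2 ⟨Finset.mem_of_mem_erase hu, ?_⟩
    simp
    field_simp
    ring
  simp only at heq
  rw [heq] at hm
  have := (Finset.mem_filter.1 hm).2
  simp at this
  field_simp
  linarith

/-- one-dimensional cuts -/
lemma cut_count {ι : Type*} [DecidableEq ι] (U : Finset ι) (hU : U.Nonempty) (s : ι → ℝ)
    (Q : Finset (Finset ι))
    (hQ : ∀ S, S ∈ Q ↔ (∃ d ∈ U.image s, S = U.filter (fun u => s u ≤ d) ∨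
      S = U.filter (fun u => ¬ s u ≤ d))) :
    Q.card = 2 * (U.image s).card := by
  have hQ2 : Q = (U.image s).image (fun d => U.filter (fun u => s u ≤ d)) ∪
      (U.image s).image (fun d => U.filter (fun u => ¬ s u ≤ d)) := by
    ext S
    rw [hQ]
    simp only [Finset.mem_union, Finset.mem_image]
    grind
  rw [hQ2, Finset.card_union_of_disjoint, 
    Finset.card_image_of_injOn (f := fun d => U.filter (fun u => s u ≤ d)),
    Finset.card_image_of_injOn (f := fun d => U.filter (fun u => ¬ s u ≤ d))]
  · ring
  · intro d hd d' hd' heq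
    simp only [Finset.mem_coe, Finset.mem_image] at hd hd'
    obtain ⟨u, hu, rfl⟩ := hd
    obtain ⟨u', hu', rfl⟩ := hd'
    have h1 := Finset.ext_iff.1 heq u
    have h2 := Finset.ext_iff.1 heq u'
    simp [hu, hu'] at h1 h2
    linarith
  · intro d hd d' hd' heq
    simp only [Finset.mem_coe, Finset.mem_image] at hd hd'
    obtain ⟨u, hu, rfl⟩ := hd
    obtain ⟨u', hu', rfl⟩ := hd'
    have h1 := Finset.ext_iff.1 heq u
    have h2 := Finset.ext_iff.1 heq u'
    simp [hu, hu'] at h1 h2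
    linarith
  · rw [Finset.disjoint_left]
    intro S h1 h2
    obtain ⟨m, hm, hmin⟩ := U.exists_min_image s hU
    simp only [Finset.mem_image] at h1 h2
    obtain ⟨_, ⟨u, hu, rfl⟩, rfl⟩ := h1
    obtain ⟨_, ⟨u', hu', rfl⟩, heq⟩ := h2
    have := Finset.ext_iff.1 heq m
    have h3 := hmin u hu
    have h4 := hmin u' hu'
    simp [hm] at this
    linarith [this.2 h3]

/-- every threshold cut is a cut at some value -/
lemma cut_thr {ι : Type*} [DecidableEq ι] (U : Finset ι) (hU : U.Nonempty) (s : ι → ℝ) (τ : ℝ) :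
    ∃ d ∈ U.image s, (∀ u ∈ U, (s u ≤ τ ↔ s u ≤ d)) ∨
      (∀ u ∈ U, (s u ≤ τ ↔ ¬ s u ≤ d)) := by
  by_cases h : (U.filter (fun u => s u ≤ τ)).Nonempty
  · obtain ⟨m, hm, hmax⟩ := (U.filter (fun u => s u ≤ τ)).exists_max_image s h
    rw [Finset.mem_filter] at hm
    refine ⟨s m, Finset.mem_image_of_mem _ hm.1, Or.inl ?_⟩
    intro u hu
    exact ⟨fun h => hmax u (Finset.mem_filter.2 ⟨hu, h⟩), fun h => h.trans hm.2⟩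
  · obtain ⟨m, hm, hmax⟩ := U.exists_max_image s hU
    refine ⟨s m, Finset.mem_image_of_mem _ hm, Or.inr ?_⟩
    intro u hu
    have := hmax u hu
    simp only [this, not_true, iff_false]
    intro h2
    exact h ⟨u, Finset.mem_filter.2 ⟨hu, h2⟩⟩

lemma exists_above (D : Finset ℝ) (d : ℝ) : ∃ s, d < s ∧ ∀ x ∈ D, d < x → s < x := by
  by_cases h : (D.filter (fun x => d < x)).Nonempty
  · obtain ⟨m, hm, hmin⟩ := (D.filter (fun x => d < x)).exists_min_image id h
    rw [Finset.mem_filter] at hm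
    refine ⟨(d + m) / 2, by linarith [hm.2], ?_⟩
    intro x hx hdx
    have := hmin x (Finset.mem_filter.2 ⟨hx, hdx⟩)
    simp only [id] at this
    linarith [hm.2]
  · refine ⟨d + 1, by linarith, ?_⟩
    intro x hx hdx
    exact absurd ⟨x, Finset.mem_filter.2 ⟨hx, hdx⟩⟩ h

lemma patt_card (V : Finset ZE) (v : ZE) (hv : v ≠ 0) (hvV : v ∈ V)
    (h : ∀ u ∈ V.erase v, ∀ c : ℝ, u ≠ c • v) (hU : (V.erase v).Nonempty) :
    (patt V v).card = 2 * degF V v := by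
  obtain ⟨e1, h1v, h1⟩ := exists_e1 V v h
  have he1 : e1 ≠ 0 := by
    rintro rfl
    obtain ⟨u, hu⟩ := hU
    exact h1 u hu rfl
  obtain ⟨e2, h2v, hd, hdec⟩ := exists_e2 v hv e1 h1v he1
  rw [deg_card V v hv hvV h e1 e2 h1v h2v hd h1]
  set U := V.erase v with hUdef
  set s : ZE → ℝ := fun u => - e2 u / e1 u with hs
  have hval : ∀ u ∈ U, ∀ a r : ℝ, (a • e1 + r • e2) u = e1 u * (a - r * s u) := by
    intro u hu a r
    have := h1 u hu
    simp [hs]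
    field_simp
    ring
  classical
  have hinj : Set.InjOn (fun S : Finset ZE => U.filter (fun u => (u ∈ S ↔ 0 < e1 u)))
      (patt V v : Set (Finset ZE)) := by
    intro S hS S' hS' heq
    have hS1 := (mem_patt.1 hS).1
    have hS2 := (mem_patt.1 hS').1
    ext u
    by_cases hu : u ∈ U
    · have := Finset.ext_iff.1 heq u
      simp only [Finset.mem_filter, hu, true_and] at this
      tauto
    · exact ⟨fun h => absurd (hS1 h) hu, fun h => absurd (hS2 h) hu⟩
  rw [← Finset.card_image_of_injOn hinj]
  apply cut_count U hU s
  intro A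
  constructor
  · intro hA
    obtain ⟨S, hS, rfl⟩ := Finset.mem_image.1 hA
    obtain ⟨hSU, f, hfv, hfp, hfn⟩ := mem_patt.1 hS
    obtain ⟨a, r, rfl⟩ := hdec f hfv
    have hsgn : ∀ u ∈ U, ((u ∈ S ↔ 0 < e1 u) ↔ 0 < a - r * s u) ∧ a - r * s u ≠ 0 := by
      intro u hu
      have hu1 := h1 u hu
      by_cases huS : u ∈ S
      · have := hfp u huS
        rw [hval u hu] at this
        refine ⟨?_, fun h0 => by rw [h0] at this; simp at this⟩
        simp only [huS, true_iff]
        exact pos_iff_pos_of_mul_pos this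
      · have := hfn u hu huS
        rw [hval u hu] at this
        refine ⟨?_, fun h0 => by rw [h0] at this; simp at this⟩
        simp only [huS, false_iff]
        rcases mul_neg_iff.1 this with h | h
        · constructor
          · intro h3; exact absurd h.1 h3
          · intro h3; linarith
        · constructor
          · intro h3; exact h.2
          · intro h3; linarith
    have hfin : ∃ τ, (∀ u ∈ U, (0 < a - r * s u ↔ s u ≤ τ)) ∨
        (∀ u ∈ U, (0 < a - r * s u ↔ ¬ s u ≤ τ)) := by
      rcases lt_trichotomy r 0 with hr | hr | hr
      · refine ⟨a / r, Or.inr ?_⟩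
        intro u hu
        rw [not_le, div_lt_iff_of_neg hr]
        constructor <;> intro <;> linarith
      · obtain ⟨m, hm, hmax⟩ := U.exists_max_image s hU
        refine ⟨s m, ?_⟩
        have h0 := (hsgn m hm).2
        simp only [hr, zero_mul, sub_zero] at h0 ⊢
        rcases lt_or_gt_of_ne h0 with h0 | h0
        · right
          intro u hu
          have := hmax u hu
          constructor
          · intro; linarith
          · intro hh; exact absurd this hh
        · left
          intro u hu
          have := hmax u hu
          exact ⟨fun _ => this, fun _ => h0⟩
      · refine ⟨a / r, Or.inl ?_⟩
        intro u hu
        rw [le_div_iff₀ hr]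
        have := (hsgn u hu).2
        constructor
        · intro; linarith
        · intro h3
          exact lt_of_le_of_ne (by linarith) (Ne.symm this)
    obtain ⟨τ, hτ⟩ := hfin
    obtain ⟨d, hdm, hdd⟩ := cut_thr U hU s τ
    refine ⟨d, hdm, ?_⟩
    rcases hτ with hτ | hτ <;> rcases hdd with hdd | hdd
    · left; apply Finset.filter_congr; intro u hu
      rw [(hsgn u hu).1, hτ u hu, hdd u hu]
    · right; apply Finset.filter_congr; intro u hu
      rw [(hsgn u hu).1, hτ u hu, hdd u hu]
    · right; apply Finset.filter_congr; intro u hu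
      rw [(hsgn u hu).1, hτ u hu, hdd u hu]
    · left; apply Finset.filter_congr; intro u hu
      rw [(hsgn u hu).1, hτ u hu, hdd u hu, not_not]
  · rintro ⟨d, hdm, hA⟩
    obtain ⟨a, hda, ha⟩ := exists_above (U.image s) d
    have hk : ∀ u ∈ U, (s u ≤ d ∧ 0 < a - 1 * s u) ∨ (¬ s u ≤ d ∧ a - 1 * s u < 0) := by
      intro u hu
      by_cases h3 : s u ≤ d
      · left; exact ⟨h3, by linarith⟩
      · right
        have := ha (s u) (Finset.mem_image_of_mem _ hu) (not_le.1 h3)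
        exact ⟨h3, by linarith⟩
    have gen : ∀ f : ZE →ₗ[ℝ] ℝ, f v = 0 → (∀ u ∈ U, f u ≠ 0) →
        A = U.filter (fun u => (0 < f u ↔ 0 < e1 u)) →
        A ∈ Finset.image (fun S : Finset ZE => U.filter (fun u => (u ∈ S ↔ 0 < e1 u)))
          (patt V v) := by
      intro f hf0 hf1 hA
      refine Finset.mem_image.2 ⟨U.filter (fun u => 0 < f u), ?_, ?_⟩
      · rw [mem_patt]
        refine ⟨Finset.filter_subset _ _, f, hf0, fun u hu => (Finset.mem_filter.1 hu).2, ?_⟩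
        intro u hu hn
        have : ¬ 0 < f u := fun h0 => hn (Finset.mem_filter.2 ⟨hu, h0⟩)
        exact lt_of_le_of_ne (not_lt.1 this) (hf1 u hu)
      · rw [hA]
        apply Finset.filter_congr; intro u hu
        simp [hu]
    rcases hA with hA | hA
    · apply gen (a • e1 + (1:ℝ) • e2) (by simp [h1v, h2v])
      · intro u hu
        rw [hval u hu]
        apply mul_ne_zero (h1 u hu)
        rcases hk u hu with h3 | h3
        · exact h3.2.ne'
        · exact h3.2.ne
      · rw [hA]
        apply Finset.filter_congr; intro u hu
        rw [hval u hu]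
        rcases hk u hu with h3 | h3
        · simp only [h3.1, true_iff]
          exact mul_pos_iff_of_pos_right h3.2
        · simp only [h3.1, false_iff]
          rcases lt_or_gt_of_ne (h1 u hu) with h4 | h4
          · have := mul_pos_of_neg_of_neg h4 h3.2
            intro h5; linarith [h5.1 this]
          · have := mul_neg_of_pos_of_neg h4 h3.2
            intro h5; linarith [h5.2 h4]
    · apply gen (-(a • e1 + (1:ℝ) • e2)) (by simp [h1v, h2v])
      · intro u hu
        rw [LinearMap.neg_apply, hval u hu]
        apply neg_ne_zero.2
        apply mul_ne_zero (h1 u hu)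
        rcases hk u hu with h3 | h3
        · exact h3.2.ne'
        · exact h3.2.ne
      · rw [hA]
        apply Finset.filter_congr; intro u hu
        rw [LinearMap.neg_apply, hval u hu]
        rcases hk u hu with h3 | h3
        · simp only [h3.1, not_true, false_iff]
          rcases lt_or_gt_of_ne (h1 u hu) with h4 | h4
          · have := mul_neg_of_neg_of_pos h4 h3.2
            intro h5; linarith [h5.1 (by linarith)]
          · have := mul_pos h4 h3.2
            intro h5; linarith [h5.2 h4]
        · simp only [h3.1, not_false_eq_true, true_iff]
          rw [← mul_neg]
          exact mul_pos_iff_of_pos_right (by linarith [h3.2])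

/-- Gordan type alternative -/
lemma gordan (W : Finset ZE) (σ : ZE → ℝ) (v : ZE) :
    (∃ f : ZE →ₗ[ℝ] ℝ, f v = 0 ∧ ∀ u ∈ W, 0 < σ u * f u) ∨
    ∃ (a : ZE → ℝ) (b : ℝ), (∀ u ∈ W, 0 ≤ a u) ∧ (∃ u ∈ W, 0 < a u) ∧
      ∑ u ∈ W, (a u * σ u) • u = b • v := by
  let Φ : (W → ℝ) →ₗ[ℝ] ZE := ∑ i : W, (LinearMap.proj i).smulRight (σ i • (i : ZE))
  have hΦ : ∀ w, Φ w = ∑ i : W, w i • σ i • (i : ZE) := by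
    intro w; simp [Φ, LinearMap.sum_apply]
  have hcont : Continuous Φ := Φ.continuous_of_finiteDimensional
  have hconv : Convex ℝ (Φ '' stdSimplex ℝ W) := (convex_stdSimplex ℝ W).linear_image Φ
  have hcomp : IsCompact (Φ '' stdSimplex ℝ W) := (isCompact_stdSimplex ℝ W).image hcont
  by_cases hdisj : Disjoint (Φ '' stdSimplex ℝ W) ((Submodule.span ℝ {v} : Submodule ℝ ZE) : Set ZE)
  · left
    obtain ⟨f, p, q, hf1, hpq, hf2⟩ := geometric_hahn_banach_compact_closed hconv hcomp
      (Submodule.span ℝ {v}).convex (Submodule.closed_of_finiteDimensional _) hdisj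
    have hq : q < 0 := by simpa using hf2 0 (Submodule.zero_mem _)
    have hv0 : f v = 0 := by
      by_contra h0
      have := hf2 ((q / f v) • v) (Submodule.smul_mem _ _ (Submodule.mem_span_singleton_self v))
      simp only [map_smul, smul_eq_mul] at this
      rw [div_mul_cancel₀ _ h0] at this
      exact lt_irrefl _ this
    refine ⟨-(f : ZE →ₗ[ℝ] ℝ), by simp [hv0], ?_⟩
    intro u hu
    have := hf1 (Φ (Pi.single ⟨u, hu⟩ 1)) ⟨_, single_mem_stdSimplex ℝ _, rfl⟩
    rw [hΦ, Finset.sum_eq_single ⟨u, hu⟩] at this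
    · simp at this ⊢
      linarith
    · intro b _ hb
      simp [hb]
    · simp
  · right
    rw [Set.not_disjoint_iff] at hdisj
    obtain ⟨_, ⟨w, ⟨hw0, hw1⟩, rfl⟩, hw⟩ := hdisj
    obtain ⟨b, hb⟩ := Submodule.mem_span_singleton.1 hw
    classical
    refine ⟨fun u => if hu : u ∈ W then w ⟨u, hu⟩ else 0, b, ?_, ?_, ?_⟩
    · intro u hu
      simp only [hu, dif_pos]
      exact hw0 _
    · by_contra hcon
      push Not at hcon
      have : ∑ i, w i ≤ 0 := by
        apply Finset.sum_nonpos
        intro i _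
        have := hcon i.1 i.2
        simpa using this
      linarith
    · rw [hb, hΦ, ← Finset.sum_coe_sort W]
      apply Finset.sum_congr rfl
      intro i _
      simp [smul_smul]

lemma pert (V : Finset ZE) (c h : ZE → ℝ) (hc : ∀ u ∈ V, 0 ≤ c u ∧ c u ≤ 1)
    (hp : ∀ u ∈ V, 0 < h u → c u < 1) (hn : ∀ u ∈ V, h u < 0 → 0 < c u) :
    ∀ᶠ ε in nhdsWithin (0:ℝ) (Set.Ioi 0), ∀ u ∈ V,
      (0 ≤ c u + ε * h u ∧ c u + ε * h u ≤ 1) ∧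
      (h u ≠ 0 → 0 < c u + ε * h u ∧ c u + ε * h u < 1) := by
  rw [Filter.eventually_all_finset]
  intro u hu
  have hcu := hc u hu
  have hpu := hp u hu
  have hnu := hn u hu
  have ht : Filter.Tendsto (fun ε : ℝ => c u + ε * h u) (nhdsWithin (0:ℝ) (Set.Ioi 0))
      (nhds (c u)) := by
    have : Continuous (fun ε : ℝ => c u + ε * h u) := by fun_prop
    have h2 := this.tendsto 0
    simp only [zero_mul, add_zero] at h2
    exact h2.mono_left nhdsWithin_le_nhds
  have hpos : ∀ᶠ ε in nhdsWithin (0:ℝ) (Set.Ioi 0), 0 < ε := self_mem_nhdsWithin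
  rcases lt_trichotomy (h u) 0 with h0 | h0 | h0
  · filter_upwards [ht.eventually (lt_mem_nhds (hnu h0)), hpos] with ε h1 h2
    have := mul_neg_of_pos_of_neg h2 h0
    exact ⟨⟨h1.le, by linarith⟩, fun _ => ⟨h1, by linarith⟩⟩
  · filter_upwards with ε
    simp [h0, hcu]
  · filter_upwards [ht.eventually (gt_mem_nhds (hpu h0)), hpos] with ε h1 h2
    have := mul_pos h2 h0
    exact ⟨⟨by linarith, h1.le⟩, fun _ => ⟨by linarith, h1⟩⟩

def zpt (V : Finset ZE) (x : ZE) (c : ZE → ℝ) : ZE := x + ∑ u ∈ V, c u • u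

def chi (S : Finset ZE) (v : ZE) (k : ℝ) (u : ZE) : ℝ := if u = v then k else if u ∈ S then 1 else 0

lemma mem_zono (V : Finset ZE) (x : ZE) (p : ZE) :
    p ∈ ({x} + ∑ v ∈ V, segment ℝ 0 v : Set ZE) ↔
      ∃ c : ZE → ℝ, (∀ u ∈ V, 0 ≤ c u ∧ c u ≤ 1) ∧ p = zpt V x c := by
  rw [Set.singleton_add]
  simp only [Set.mem_image, Set.mem_finsetSum]
  constructor
  · rintro ⟨_, ⟨g, hg, rfl⟩, rfl⟩
    have : ∀ u : ZE, ∃ t : ℝ, u ∈ V → (0 ≤ t ∧ t ≤ 1) ∧ g u = t • u := by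
      intro u
      by_cases hu : u ∈ V
      · have := hg hu
        rw [segment_eq_image] at this
        obtain ⟨t, ht, h⟩ := this
        exact ⟨t, fun _ => ⟨ht, by simpa using h.symm⟩⟩
      · exact ⟨0, fun h => absurd h hu⟩
    choose t ht using this
    refine ⟨t, fun u hu => (ht u hu).1, ?_⟩
    simp only [zpt]
    congr 1
    exact Finset.sum_congr rfl (fun u hu => (ht u hu).2)
  · rintro ⟨c, hc, rfl⟩
    refine ⟨_, ⟨fun u => c u • u, ?_, rfl⟩, rfl⟩
    intro u hu
    rw [segment_eq_image]
    exact ⟨c u, hc u hu, by simp⟩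

lemma zpt_apply (V : Finset ZE) (x : ZE) (c : ZE → ℝ) (L : ZE →ₗ[ℝ] ℝ) :
    L (zpt V x c) = L x + ∑ u ∈ V, c u * L u := by
  simp [zpt, map_sum]

lemma chi_sum (V : Finset ZE) (v : ZE) (hv : v ∈ V) (S : Finset ZE) (hS : S ⊆ V.erase v) (k : ℝ)
    (g : ZE → ℝ) : ∑ u ∈ V, chi S v k u * g u = ∑ u ∈ S, g u + k * g v := by
  rw [← Finset.add_sum_erase V _ hv, add_comm]
  congr 1
  · rw [← Finset.sum_subset hS]
    · apply Finset.sum_congr rfl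
      intro u hu
      have := (Finset.mem_erase.1 (hS hu)).1
      simp [chi, this, hu]
    · intro u hu hn
      simp [chi, (Finset.mem_erase.1 hu).1, hn]
  · simp [chi]

lemma uniq_face (V : Finset ZE) (x : ZE) (v : ZE) (hv : v ∈ V) (S : Finset ZE)
    (f : ZE →ₗ[ℝ] ℝ) (hfv : f v = 0) (hfp : ∀ u ∈ S, 0 < f u)
    (hfn : ∀ u ∈ V.erase v, u ∉ S → f u < 0) (k : ℝ) (c : ZE → ℝ)
    (hc : ∀ u ∈ V, 0 ≤ c u ∧ c u ≤ 1) :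
    f (zpt V x c) ≤ f (zpt V x (chi S v k)) ∧
    (f (zpt V x c) = f (zpt V x (chi S v k)) → ∀ u ∈ V, u ≠ v → c u = chi S v k u) := by
  have hle : ∀ u ∈ V, c u * f u ≤ chi S v k u * f u := by
    intro u hu
    have hcu := hc u hu
    by_cases huv : u = v
    · rw [huv, hfv]; simp
    by_cases huS : u ∈ S
    · have := hfp u huS
      simp only [chi, huv, huS, if_true, if_false]
      nlinarith
    · have := hfn u (Finset.mem_erase.2 ⟨huv, hu⟩) huS
      simp only [chi, huv, huS, if_false]
      nlinarith
  rw [zpt_apply, zpt_apply]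
  refine ⟨by linarith [Finset.sum_le_sum hle], ?_⟩
  intro heq u hu huv
  have h1 := (Finset.sum_eq_sum_iff_of_le hle).1 (by linarith) u hu
  have hne : f u ≠ 0 := by
    by_cases huS : u ∈ S
    · exact (hfp u huS).ne'
    · exact (hfn u (Finset.mem_erase.2 ⟨huv, hu⟩) huS).ne
  exact mul_right_cancel₀ hne h1

lemma uniq_rep (V : Finset ZE) (x : ZE) (v : ZE) (hv : v ∈ V) (hv0 : v ≠ 0) (S : Finset ZE)
    (hS : S ∈ patt V v) (k : ℝ) (c : ZE → ℝ)
    (hc : ∀ u ∈ V, 0 ≤ c u ∧ c u ≤ 1) (heq : zpt V x c = zpt V x (chi S v k)) :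
    ∀ u ∈ V, c u = chi S v k u := by
  obtain ⟨hSU, f, hfv, hfp, hfn⟩ := mem_patt.1 hS
  have h1 := (uniq_face V x v hv S f hfv hfp hfn k c hc).2 (by rw [heq])
  intro u hu
  by_cases huv : u = v
  · subst huv
    simp only [zpt] at heq
    have h2 := add_left_cancel heq
    rw [← Finset.add_sum_erase V _ hv, ← Finset.add_sum_erase V _ hv] at h2
    rw [Finset.sum_congr rfl (g := fun w => chi S u k w • w) (fun w hw => by
      rw [h1 w (Finset.mem_of_mem_erase hw) (Finset.ne_of_mem_erase hw)])] at h2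
    exact smul_left_injective ℝ hv0 (add_right_cancel h2)
  · exact h1 u hu huv

lemma chi_mem {V : Finset ZE} {S : Finset ZE} {v : ZE} {k : ℝ} (hk0 : 0 ≤ k) (hk1 : k ≤ 1) :
    ∀ u ∈ V, 0 ≤ chi S v k u ∧ chi S v k u ≤ 1 := by
  intro u _
  unfold chi
  split_ifs
  · exact ⟨hk0, hk1⟩
  · norm_num
  · norm_num

lemma ext_mem (V : Finset ZE) (x : ZE) (L : ZE →ₗ[ℝ] ℝ) (t : ℝ) (v : ZE) (hv : v ∈ V)
    (hL : L v ≠ 0) (S : Finset ZE) (hS : S ∈ patt V v) (k : ℝ)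
    (hk0 : 0 ≤ k) (hk1 : k ≤ 1) (ht : L (zpt V x (chi S v k)) = t) :
    zpt V x (chi S v k) ∈ Set.extremePoints ℝ
      (({x} + ∑ v ∈ V, segment ℝ 0 v : Set ZE) ∩ {p | L p = t}) := by
  obtain ⟨hSU, f, hfv, hfp, hfn⟩ := mem_patt.1 hS
  have hk := chi_mem (V := V) (S := S) (v := v) hk0 hk1
  rw [mem_extremePoints_iff_left]
  refine ⟨⟨(mem_zono V x _).2 ⟨_, hk, rfl⟩, ht⟩, ?_⟩
  rintro q ⟨hq, hqt⟩ r ⟨hr, hrt⟩ hseg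
  obtain ⟨c, hc, rfl⟩ := (mem_zono V x _).1 hq
  obtain ⟨c', hc', rfl⟩ := (mem_zono V x _).1 hr
  obtain ⟨a, b, ha, hb, hab, heq⟩ := hseg
  have h1 := uniq_face V x v hv S f hfv hfp hfn k c hc
  have h2 := uniq_face V x v hv S f hfv hfp hfn k c' hc'
  have h3 := congrArg f heq
  simp only [map_add, map_smul, smul_eq_mul] at h3
  have h4 : f (zpt V x c) = f (zpt V x (chi S v k)) := by
    apply le_antisymm h1.1
    by_contra hlt
    push Not at hlt
    have e1 := mul_lt_mul_of_pos_left hlt ha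
    have e2 := mul_le_mul_of_nonneg_left h2.1 hb.le
    have e3 : a * f (zpt V x (chi S v k)) + b * f (zpt V x (chi S v k)) =
      f (zpt V x (chi S v k)) := by rw [← add_mul, hab, one_mul]
    linarith
  have h5 := h1.2 h4
  have h6 : L (zpt V x c) = L (zpt V x (chi S v k)) := by rw [ht]; exact hqt
  rw [zpt_apply, zpt_apply, ← Finset.add_sum_erase V _ hv, ← Finset.add_sum_erase V _ hv] at h6
  rw [Finset.sum_congr rfl (g := fun w => chi S v k w * L w) (fun w hw => by
      rw [h5 w (Finset.mem_of_mem_erase hw) (Finset.ne_of_mem_erase hw)])] at h6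
  have h7 : c v = chi S v k v := mul_right_cancel₀ hL (by linarith)
  unfold zpt
  congr 1
  apply Finset.sum_congr rfl
  intro u hu
  by_cases huv : u = v
  · rw [huv, h7]
  · rw [h5 u hu huv]

lemma zpt_add (V : Finset ZE) (x : ZE) (c h : ZE → ℝ) (ε : ℝ) :
    zpt V x (fun u => c u + ε * h u) = zpt V x c + ε • ∑ u ∈ V, h u • u := by
  simp only [zpt, add_smul, mul_smul, Finset.sum_add_distrib, Finset.smul_sum, add_assoc]

lemma ext_one (V : Finset ZE) (x : ZE) (L : ZE →ₗ[ℝ] ℝ) (t : ℝ)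
    (hpair : ∀ u ∈ V, ∀ v ∈ V, u ≠ v → ∀ c : ℝ, v ≠ c • u)
    (hL : ∀ u ∈ V, L u ≠ 0) (c : ZE → ℝ) (hc : ∀ u ∈ V, 0 ≤ c u ∧ c u ≤ 1)
    (hp : zpt V x c ∈ Set.extremePoints ℝ
      (({x} + ∑ v ∈ V, segment ℝ 0 v : Set ZE) ∩ {p | L p = t}))
    (u w : ZE) (hu : u ∈ V) (hw : w ∈ V) (huw : u ≠ w)
    (hcu : 0 < c u ∧ c u < 1) (hcw : 0 < c w ∧ c w < 1) : False := by
  let h : ZE → ℝ := fun y => if y = u then L w else if y = w then - L u else 0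
  have hsum : ∑ y ∈ V, h y • y = L w • u - L u • w := by
    rw [← Finset.add_sum_erase V _ hu,
      ← Finset.add_sum_erase (V.erase u) _ (Finset.mem_erase.2 ⟨huw.symm, hw⟩),
      Finset.sum_eq_zero]
    · simp [h, huw.symm, sub_eq_add_neg]
    · intro y hy
      simp only [Finset.mem_erase] at hy
      simp [h, hy.1, hy.2.1]
  have hh : ∀ y, h y ≠ 0 → 0 < c y ∧ c y < 1 := by
    intro y hy
    by_cases h1 : y = u
    · rw [h1]; exact hcu
    by_cases h2 : y = w
    · rw [h2]; exact hcw
    simp [h, h1, h2] at hy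
  have e1 := pert V c h hc (fun y _ h0 => (hh y h0.ne').2) (fun y _ h0 => (hh y h0.ne).1)
  have e2 := pert V c (-h) hc (fun y _ h0 => (hh y (by intro h1; simp [h1] at h0)).2)
    (fun y _ h0 => (hh y (by intro h1; simp [h1] at h0)).1)
  have hpos : ∀ᶠ ε in nhdsWithin (0:ℝ) (Set.Ioi 0), 0 < ε := self_mem_nhdsWithin
  obtain ⟨ε, ⟨h1, h2⟩, hε⟩ := ((e1.and e2).and hpos).exists
  rw [mem_extremePoints_iff_left] at hp
  obtain ⟨⟨_, hpt⟩, hp2⟩ := hp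
  have hpt : L (zpt V x c) = t := hpt
  have hns : ∑ y ∈ V, (-h) y • y = -(L w • u - L u • w) := by
    rw [← hsum]; simp
  have hL0 : L (L w • u - L u • w) = 0 := by simp; ring
  have := hp2 (zpt V x (fun u => c u + ε * h u))
    ⟨(mem_zono V x _).2 ⟨_, fun y hy => (h1 y hy).1, rfl⟩, by
      change L _ = t
      rw [zpt_add, hsum, map_add, map_smul, hL0, hpt]; simp⟩
    (zpt V x (fun u => c u + ε * (-h) u))
    ⟨(mem_zono V x _).2 ⟨_, fun y hy => (h2 y hy).1, rfl⟩, by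
      change L _ = t
      rw [zpt_add, hns, map_add, map_smul, map_neg, hL0, hpt]; simp⟩
    ⟨1/2, 1/2, by norm_num, by norm_num, by norm_num, by
      rw [zpt_add, zpt_add, hns, hsum]; module⟩
  rw [zpt_add, hsum] at this
  have h3 : ε • (L w • u - L u • w) = 0 := by simpa using this
  rw [smul_eq_zero] at h3
  rcases h3 with h3 | h3
  · exact hε.ne' h3
  · apply hpair w hw u hu huw.symm (L u / L w)
    have h4 : L w • u = L u • w := sub_eq_zero.1 h3
    rw [div_eq_inv_mul, mul_smul, ← h4, smul_smul, inv_mul_cancel₀ (hL w hw), one_smul]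

lemma ext_sub (V : Finset ZE) (x : ZE) (L : ZE →ₗ[ℝ] ℝ) (t : ℝ)
    (hpair : ∀ u ∈ V, ∀ v ∈ V, u ≠ v → ∀ c : ℝ, v ≠ c • u)
    (hL : ∀ u ∈ V, L u ≠ 0)
    (htT : t ∉ V.powerset.image (fun S => L x + ∑ u ∈ S, L u)) (p : ZE)
    (hp : p ∈ Set.extremePoints ℝ
      (({x} + ∑ v ∈ V, segment ℝ 0 v : Set ZE) ∩ {p | L p = t})) :
    ∃ v ∈ V, ∃ S ∈ patt V v, ∃ k : ℝ, 0 < k ∧ k < 1 ∧ p = zpt V x (chi S v k) := by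
  obtain ⟨c, hc, rfl⟩ := (mem_zono V x p).1 hp.1.1
  have hpt : L (zpt V x c) = t := hp.1.2
  have hone := ext_one V x L t hpair hL
  obtain ⟨v, hv, hcv⟩ : ∃ v ∈ V, 0 < c v ∧ c v < 1 := by
    by_contra hcon
    push Not at hcon
    apply htT
    refine Finset.mem_image.2 ⟨V.filter (fun u => c u = 1),
      Finset.mem_powerset.2 (Finset.filter_subset _ _), ?_⟩
    rw [← hpt, zpt_apply, Finset.sum_filter]
    congr 1
    apply Finset.sum_congr rfl
    intro u hu
    split_ifs with h1
    · rw [h1, one_mul]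
    · have h2 := hc u hu
      have : c u = 0 := by
        by_contra h0
        have h3 := hcon u hu (lt_of_le_of_ne h2.1 (Ne.symm h0))
        exact h1 (le_antisymm h2.2 h3)
      rw [this, zero_mul]
  have hother : ∀ u ∈ V, u ≠ v → c u = 0 ∨ c u = 1 := by
    intro u hu huv
    by_contra hcon
    push Not at hcon
    have h2 := hc u hu
    exact hone c hc hp u v hu hv huv ⟨lt_of_le_of_ne h2.1 (Ne.symm hcon.1),
      lt_of_le_of_ne h2.2 hcon.2⟩ hcv
  set S := (V.erase v).filter (fun u => c u = 1) with hS
  have hchi : ∀ u ∈ V, c u = chi S v (c v) u := by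
    intro u hu
    unfold chi
    split_ifs with h1 h2
    · rw [h1]
    · exact (Finset.mem_filter.1 h2).2
    · rcases hother u hu h1 with h3 | h3
      · exact h3
      · exact absurd (Finset.mem_filter.2 ⟨Finset.mem_erase.2 ⟨h1, hu⟩, h3⟩) h2
  refine ⟨v, hv, S, ?_, c v, hcv.1, hcv.2, ?_⟩
  · rw [mem_patt]
    refine ⟨Finset.filter_subset _ _, ?_⟩
    rcases gordan (V.erase v) (fun u => if u ∈ S then 1 else -1) v with ⟨f, hf, hf2⟩ | hbad
    · refine ⟨f, hf, ?_, ?_⟩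
      · intro u hu
        have := hf2 u (Finset.filter_subset _ _ hu)
        simpa [hu] using this
      · intro u hu hn
        have := hf2 u hu
        simp only [hn, if_false] at this
        linarith
    · exfalso
      obtain ⟨a, b, ha, ⟨w, hw, haw⟩, hsum⟩ := hbad
      let h : ZE → ℝ := fun u => if u = v then b else -(a u * (if u ∈ S then 1 else -1))
      have hs0 : ∑ u ∈ V, h u • u = 0 := by
        rw [← Finset.add_sum_erase V _ hv, Finset.sum_congr rfl
          (g := fun u => -((a u * (if u ∈ S then 1 else -1)) • u)), Finset.sum_neg_distrib, hsum]
        · simp [h]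
        · intro u hu
          simp only [h, Finset.ne_of_mem_erase hu, if_false, neg_smul]
      have e1 := pert V c h hc (by
        intro u hu h0
        by_cases huv : u = v
        · rw [huv]; exact hcv.2
        have := ha u (Finset.mem_erase.2 ⟨huv, hu⟩)
        by_cases huS : u ∈ S
        · simp only [h, huv, huS, if_true, if_false] at h0
          linarith
        · have h3 := hchi u hu
          simp only [chi, huv, huS, if_false] at h3
          rw [h3]; norm_num) (by
        intro u hu h0
        by_cases huv : u = v
        · rw [huv]; exact hcv.1
        have := ha u (Finset.mem_erase.2 ⟨huv, hu⟩)
        by_cases huS : u ∈ S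
        · have h3 := hchi u hu
          simp only [chi, huv, huS, if_false, if_true] at h3
          rw [h3]; norm_num
        · simp only [h, huv, huS, if_false] at h0
          linarith)
      have ht : Filter.Tendsto (fun ε : ℝ => c v + ε * h v) (nhdsWithin (0:ℝ) (Set.Ioi 0))
          (nhds (c v)) := by
        have : Continuous (fun ε : ℝ => c v + ε * h v) := by fun_prop
        have h2 := this.tendsto 0
        simp only [zero_mul, add_zero] at h2
        exact h2.mono_left nhdsWithin_le_nhds
      obtain ⟨ε, ⟨h1, h2⟩, h3⟩ := ((e1.and (ht.eventually (lt_mem_nhds hcv.1))).and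
        (ht.eventually (gt_mem_nhds hcv.2))).exists
      have heq : zpt V x (fun u => c u + ε * h u) = zpt V x c := by
        rw [zpt_add, hs0]; simp
      have hwv := Finset.ne_of_mem_erase hw
      refine hone (fun u => c u + ε * h u) (fun u hu => (h1 u hu).1) (by rw [heq]; exact hp)
        w v (Finset.mem_of_mem_erase hw) hv hwv ((h1 w (Finset.mem_of_mem_erase hw)).2 ?_)
        ⟨h2, h3⟩
      simp only [h, hwv, if_false]
      apply neg_ne_zero.2
      apply mul_ne_zero haw.ne'
      split_ifs <;> norm_num
  · unfold zpt
    congr 1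
    apply Finset.sum_congr rfl
    intro u hu
    rw [← hchi u hu]

def kk (x : ZE) (L : ZE →ₗ[ℝ] ℝ) (t : ℝ) (v : ZE) (S : Finset ZE) : ℝ :=
  (t - (L x + ∑ u ∈ S, L u)) / L v

lemma kk_iff (V : Finset ZE) (x : ZE) (L : ZE →ₗ[ℝ] ℝ) (t : ℝ) (v : ZE) (hv : v ∈ V)
    (hL : L v ≠ 0) (S : Finset ZE) (hS : S ∈ patt V v) (k : ℝ) :
    L (zpt V x (chi S v k)) = t ↔ k = kk x L t v S := by
  rw [zpt_apply, chi_sum V v hv S (mem_patt.1 hS).1, kk, eq_div_iff hL]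
  constructor <;> intro h <;> linarith

lemma count (V : Finset ZE) (x : ZE) (L : ZE →ₗ[ℝ] ℝ) (t : ℝ)
    (hne : ∀ v ∈ V, v ≠ 0)
    (hpair : ∀ u ∈ V, ∀ v ∈ V, u ≠ v → ∀ c : ℝ, v ≠ c • u)
    (hL : ∀ u ∈ V, L u ≠ 0)
    (htT : t ∉ V.powerset.image (fun S => L x + ∑ u ∈ S, L u)) :
    (nVert (({x} + ∑ v ∈ V, segment ℝ 0 v : Set ZE) ∩ {p | L p = t}) : ℝ) =
      ∑ v ∈ V, ∑ S ∈ patt V v, if 0 < kk x L t v S ∧ kk x L t v S < 1 then (1:ℝ) else 0 := by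
  classical
  let I : Finset (Σ _ : ZE, Finset ZE) := (V.sigma (patt V)).filter
    (fun i => 0 < kk x L t i.1 i.2 ∧ kk x L t i.1 i.2 < 1)
  have hset : Set.extremePoints ℝ (({x} + ∑ v ∈ V, segment ℝ 0 v : Set ZE) ∩ {p | L p = t}) =
      (fun i : (Σ _ : ZE, Finset ZE) => zpt V x (chi i.2 i.1 (kk x L t i.1 i.2))) ''
        (I : Set (Σ _ : ZE, Finset ZE)) := by
    ext p
    constructor
    · intro hp
      obtain ⟨v, hv, S, hS, k, h0, h1, rfl⟩ := ext_sub V x L t hpair hL htT p hp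
      have hk := (kk_iff V x L t v hv (hL v hv) S hS k).1 hp.1.2
      refine ⟨⟨v, S⟩, ?_, ?_⟩
      · simp only [I, Finset.coe_filter, Finset.mem_sigma]
        exact ⟨⟨hv, hS⟩, by rw [← hk]; exact ⟨h0, h1⟩⟩
      · simp only [← hk]
    · rintro ⟨⟨v, S⟩, hi, rfl⟩
      simp only [I, Finset.mem_coe, Finset.mem_filter, Finset.mem_sigma] at hi
      exact ext_mem V x L t v hi.1.1 (hL v hi.1.1) S hi.1.2 _ hi.2.1.le hi.2.2.le
        ((kk_iff V x L t v hi.1.1 (hL v hi.1.1) S hi.1.2 _).2 rfl)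
  have hinj : Set.InjOn (fun i : (Σ _ : ZE, Finset ZE) =>
      zpt V x (chi i.2 i.1 (kk x L t i.1 i.2))) (I : Set (Σ _ : ZE, Finset ZE)) := by
    rintro ⟨v, S⟩ hi ⟨w, S'⟩ hj heq
    simp only [I, Finset.mem_coe, Finset.mem_filter, Finset.mem_sigma] at hi hj heq
    have h1 := uniq_rep V x w hj.1.1 (hne w hj.1.1) S' hj.1.2 _ _
      (chi_mem hi.2.1.le hi.2.2.le) heq
    have hvw : v = w := by
      by_contra hvw
      have := h1 v hi.1.1
      simp only [chi, if_true, hvw, if_false] at this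
      split_ifs at this
      · linarith [hi.2.2]
      · linarith [hi.2.1]
    subst hvw
    congr 1
    ext u
    have s1 := (mem_patt.1 hi.1.2).1
    have s2 := (mem_patt.1 hj.1.2).1
    by_cases hu : u ∈ V.erase v
    · have := h1 u (Finset.mem_of_mem_erase hu)
      simp only [chi, Finset.ne_of_mem_erase hu, if_false] at this
      by_cases a1 : u ∈ S <;> by_cases a2 : u ∈ S' <;> simp_all
    · exact ⟨fun h => absurd (s1 h) hu, fun h => absurd (s2 h) hu⟩
  rw [nVert, hset, hinj.ncard_image, Set.ncard_coe_finset]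
  simp only [I]
  rw [Finset.card_filter, Finset.sum_sigma]
  push_cast
  rfl

lemma tMax_eq (V : Finset ZE) (x z : ZE) (L : ZE →ₗ[ℝ] ℝ) (hz : ∀ p, dotp z p = L p) :
    tMax ({x} + ∑ v ∈ V, segment ℝ 0 v : Set ZE) z = L x + ∑ u ∈ V, max 0 (L u) := by
  unfold tMax
  apply IsGreatest.csSup_eq
  constructor
  · refine ⟨zpt V x (fun u => if 0 < L u then 1 else 0), (mem_zono V x _).2 ⟨_, ?_, rfl⟩, ?_⟩
    · intro u _; split_ifs <;> norm_num
    · rw [hz, zpt_apply]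
      congr 1
      apply Finset.sum_congr rfl
      intro u _
      split_ifs with h
      · rw [max_eq_right h.le, one_mul]
      · rw [max_eq_left (not_lt.1 h), zero_mul]
  · rintro _ ⟨p, hp, rfl⟩
    obtain ⟨c, hc, rfl⟩ := (mem_zono V x _).1 hp
    rw [hz, zpt_apply]
    gcongr with u hu
    have := hc u hu
    have h1 := le_max_left 0 (L u)
    have h2 := le_max_right 0 (L u)
    nlinarith

lemma tMin_eq (V : Finset ZE) (x z : ZE) (L : ZE →ₗ[ℝ] ℝ) (hz : ∀ p, dotp z p = L p) :
    tMin ({x} + ∑ v ∈ V, segment ℝ 0 v : Set ZE) z = L x + ∑ u ∈ V, min 0 (L u) := by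
  unfold tMin
  apply IsLeast.csInf_eq
  constructor
  · refine ⟨zpt V x (fun u => if 0 < L u then 0 else 1), (mem_zono V x _).2 ⟨_, ?_, rfl⟩, ?_⟩
    · intro u _; split_ifs <;> norm_num
    · rw [hz, zpt_apply]
      congr 1
      apply Finset.sum_congr rfl
      intro u _
      split_ifs with h
      · rw [min_eq_left h.le, zero_mul]
      · rw [min_eq_right (not_lt.1 h), one_mul]
  · rintro _ ⟨p, hp, rfl⟩
    obtain ⟨c, hc, rfl⟩ := (mem_zono V x _).1 hp
    rw [hz, zpt_apply]
    gcongr with u hu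
    have := hc u hu
    have h1 := min_le_left 0 (L u)
    have h2 := min_le_right 0 (L u)
    nlinarith

lemma kk_set (x : ZE) (L : ZE →ₗ[ℝ] ℝ) (t : ℝ) (v : ZE) (S : Finset ZE) (hL : L v ≠ 0) :
    (0 < kk x L t v S ∧ kk x L t v S < 1) ↔
      t ∈ Set.Ioo (L x + ∑ u ∈ S, L u + min 0 (L v)) (L x + ∑ u ∈ S, L u + max 0 (L v)) := by
  unfold kk
  rcases lt_or_gt_of_ne hL with h | h
  · rw [min_eq_right h.le, max_eq_left h.le, div_lt_iff_of_neg h, lt_div_iff_of_neg h, Set.mem_Ioo]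
    constructor <;> rintro ⟨h1, h2⟩ <;> constructor <;> linarith
  · rw [min_eq_left h.le, max_eq_right h.le, div_lt_iff₀ h, lt_div_iff₀ h, Set.mem_Ioo]
    constructor <;> rintro ⟨h1, h2⟩ <;> constructor <;> linarith

lemma max_sub_min (a : ℝ) : max 0 a - min 0 a = |a| := by
  rcases le_total 0 a with h | h
  · simp [h, abs_of_nonneg]
  · simp [h, abs_of_nonpos]

open MeasureTheory in
lemma int_Ioo (m M lo hi : ℝ) (h1 : m ≤ lo) (h2 : lo ≤ hi) (h3 : hi ≤ M) :
    IntervalIntegrable ((Set.Ioo lo hi).indicator (fun _ => (1:ℝ))) volume m M ∧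
    ∫ t in m..M, (Set.Ioo lo hi).indicator (fun _ => (1:ℝ)) t = hi - lo := by
  constructor
  · rw [intervalIntegrable_iff_integrableOn_Ioc_of_le (by linarith)]
    exact (integrableOn_const (by simp) (by simp)).indicator measurableSet_Ioo
  · rw [intervalIntegral.integral_of_le (by linarith), setIntegral_indicator measurableSet_Ioo,
      Set.inter_eq_right.2]
    · simp [h2]
    · intro t ht
      exact ⟨by linarith [ht.1], by linarith [ht.2]⟩

lemma integral_eq (V : Finset ZE) (x z : ZE) (L : ZE →ₗ[ℝ] ℝ) (hz : ∀ p, dotp z p = L p)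
    (hne : ∀ v ∈ V, v ≠ 0)
    (hpair : ∀ u ∈ V, ∀ v ∈ V, u ≠ v → ∀ c : ℝ, v ≠ c • u)
    (hL : ∀ u ∈ V, L u ≠ 0) :
    avgVert ({x} + ∑ v ∈ V, segment ℝ 0 v : Set ZE) z =
      (∑ v ∈ V, |L v|)⁻¹ * ∑ v ∈ V, ((patt V v).card : ℝ) * |L v| := by
  have hset : ∀ t, {p : ZE | dotp z p = t} = {p | L p = t} := by
    intro t; ext p; simp [hz]
  unfold avgVert
  simp only [hset]
  rw [tMax_eq V x z L hz, tMin_eq V x z L hz]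
  have hw : L x + ∑ u ∈ V, max 0 (L u) - (L x + ∑ u ∈ V, min 0 (L u)) = ∑ u ∈ V, |L u| := by
    rw [add_sub_add_left_eq_sub, ← Finset.sum_sub_distrib]
    exact Finset.sum_congr rfl (fun u _ => max_sub_min _)
  rw [hw]
  congr 1
  have hIoo : ∀ v ∈ V, ∀ S ∈ patt V v, _ := fun v hv S hS =>
    int_Ioo (L x + ∑ u ∈ V, min 0 (L u)) (L x + ∑ u ∈ V, max 0 (L u))
      (L x + ∑ u ∈ S, L u + min 0 (L v)) (L x + ∑ u ∈ S, L u + max 0 (L v)) (by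
        have hSU := (mem_patt.1 hS).1
        rw [← Finset.add_sum_erase V _ hv]
        have a1 : ∑ u ∈ V.erase v, min 0 (L u) ≤ ∑ u ∈ S, min 0 (L u) := by
          rw [← Finset.sum_sdiff hSU]
          have : ∑ u ∈ V.erase v \ S, min 0 (L u) ≤ 0 :=
            Finset.sum_nonpos (fun u _ => min_le_left _ _)
          linarith
        have a2 : ∑ u ∈ S, min 0 (L u) ≤ ∑ u ∈ S, L u :=
          Finset.sum_le_sum (fun u _ => min_le_right _ _)
        linarith) (by
        have := min_le_left 0 (L v)
        have := le_max_left 0 (L v)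
        linarith) (by
        have hSU := (mem_patt.1 hS).1
        rw [← Finset.add_sum_erase V _ hv]
        have a1 : ∑ u ∈ S, max 0 (L u) ≤ ∑ u ∈ V.erase v, max 0 (L u) := by
          rw [← Finset.sum_sdiff hSU]
          have : 0 ≤ ∑ u ∈ V.erase v \ S, max 0 (L u) :=
            Finset.sum_nonneg (fun u _ => le_max_left _ _)
          linarith
        have a2 : ∑ u ∈ S, L u ≤ ∑ u ∈ S, max 0 (L u) :=
          Finset.sum_le_sum (fun u _ => le_max_right _ _)
        linarith)
  have hae : ∀ᵐ t : ℝ, t ∉ (V.powerset.image (fun S => L x + ∑ u ∈ S, L u) : Finset ℝ) :=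
    (Finset.countable_toSet _).ae_notMem _
  rw [intervalIntegral.integral_congr_ae (g := fun t => ∑ v ∈ V, ∑ S ∈ patt V v,
    (Set.Ioo (L x + ∑ u ∈ S, L u + min 0 (L v)) (L x + ∑ u ∈ S, L u + max 0 (L v))).indicator
      (fun _ => (1:ℝ)) t)]
  · rw [intervalIntegral.integral_finsetSum]
    · apply Finset.sum_congr rfl
      intro v hv
      rw [intervalIntegral.integral_finsetSum]
      · rw [Finset.sum_congr rfl (g := fun _ => |L v|), Finset.sum_const, nsmul_eq_mul]
        intro S hS
        rw [(hIoo v hv S hS).2, add_sub_add_left_eq_sub, max_sub_min]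
      · intro S hS
        exact (hIoo v hv S hS).1
    · intro v hv
      have := IntervalIntegrable.sum (patt V v) (fun S hS => (hIoo v hv S hS).1)
      refine this.congr ?_
      intro t _
      simp
  · filter_upwards [hae] with t ht _
    rw [count V x L t hne hpair hL ht]
    apply Finset.sum_congr rfl
    intro v hv
    apply Finset.sum_congr rfl
    intro S hS
    rw [Set.indicator_apply]
    exact if_congr (kk_set x L t v S (hL v hv)) rfl rfl

lemma exists_z (L : ZE →ₗ[ℝ] ℝ) : ∃ z : ZE, ∀ p, dotp z p = L p := by
  refine ⟨fun i => L (Pi.single i 1), ?_⟩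
  intro p
  have : p = ∑ i, p i • (Pi.single i 1 : ZE) := by
    ext j; simp [Finset.sum_apply, Pi.single_apply]
  conv_rhs => rw [this]
  simp only [dotp, map_sum, map_smul, smul_eq_mul]
  exact Finset.sum_congr rfl (fun i _ => mul_comm _ _)

/-- If `P ⊂ ℝ³` is a zonotope with generator set `V` (pairwise linearly
independent, spanning `ℝ³`) and `A(P,z) = λ` for every nonzero `z`, then
`λ = 2 · deg v` for every `v ∈ V` in the hypergraph `ℱ`. -/
theorem zonotope_const_avgVert_deg (V : Finset (Fin 3 → ℝ)) (x : Fin 3 → ℝ)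
    (hne : ∀ v ∈ V, v ≠ 0)
    (hpair : ∀ u ∈ V, ∀ v ∈ V, u ≠ v → ∀ c : ℝ, v ≠ c • u)
    (hspan : Submodule.span ℝ (V : Set (Fin 3 → ℝ)) = ⊤)
    (P : Set (Fin 3 → ℝ)) (hP : P = {x} + ∑ v ∈ V, segment ℝ 0 v)
    (lam : ℝ) (havg : ∀ z : Fin 3 → ℝ, z ≠ 0 → avgVert P z = lam) :
    ∀ v ∈ V, lam = 2 * (degF V v : ℝ) := by

  intro v hv
  subst hP
  have hmul : ∀ w ∈ V, ∀ u ∈ V.erase w, ∀ c : ℝ, u ≠ c • w := fun w hw u hu =>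
    hpair w hw u (Finset.mem_of_mem_erase hu) (Finset.ne_of_mem_erase hu).symm
  have hU : ∀ w ∈ V, (V.erase w).Nonempty := by
    intro w hw
    by_contra hcon
    rw [Finset.not_nonempty_iff_eq_empty] at hcon
    have hVw : V = {w} := by
      rw [← Finset.insert_erase hw, hcon]; rfl
    have h1 := finrank_span_singleton (K := ℝ) (hne w hw)
    rw [hVw, Finset.coe_singleton] at hspan
    rw [hspan, finrank_top] at h1
    simp at h1
  have hid : ∀ L : ZE →ₗ[ℝ] ℝ, (∀ u ∈ V, L u ≠ 0) →
      ∑ u ∈ V, (2 * (degF V u : ℝ) - lam) * |L u| = 0 := by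
    intro L hL
    obtain ⟨z, hz⟩ := exists_z L
    have hz0 : z ≠ 0 := by
      rintro rfl
      apply hL v hv
      rw [← hz]; simp [dotp]
    have h1 := havg z hz0
    rw [integral_eq V x z L hz hne hpair hL] at h1
    have hpos : 0 < ∑ u ∈ V, |L u| :=
      Finset.sum_pos (fun u hu => abs_pos.2 (hL u hu)) ⟨v, hv⟩
    rw [inv_mul_eq_iff_eq_mul₀ hpos.ne'] at h1
    simp only [sub_mul, Finset.sum_sub_distrib]
    rw [← Finset.mul_sum, mul_comm lam, ← h1, sub_eq_zero]
    apply Finset.sum_congr rfl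
    intro u hu
    rw [patt_card V u (hne u hu) hu (hmul u hu) (hU u hu)]
    push_cast; rfl
  obtain ⟨e, hev, he⟩ := exists_e1 V v (hmul v hv)
  obtain ⟨g, hg⟩ : ∃ g : ZE →ₗ[ℝ] ℝ, g v ≠ 0 := by
    by_contra hcon
    push Not at hcon
    exact hne v hv ((Module.forall_dual_apply_eq_zero_iff ℝ v).1 hcon)
  have hsmall : ∀ᶠ s in nhdsWithin (0:ℝ) (Set.Ioi 0), ∀ u ∈ V.erase v, s * |g u| < |e u| := by
    rw [Filter.eventually_all_finset]
    intro u hu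
    have hc : Continuous (fun s : ℝ => s * |g u|) := by fun_prop
    have h2 := hc.tendsto 0
    simp only [zero_mul] at h2
    exact (h2.mono_left nhdsWithin_le_nhds).eventually (gt_mem_nhds (abs_pos.2 (he u hu)))
  have hpos : ∀ᶠ ε in nhdsWithin (0:ℝ) (Set.Ioi 0), 0 < ε := self_mem_nhdsWithin
  obtain ⟨s, hs, hs0⟩ := (hsmall.and hpos).exists
  set k : ZE → ℝ := fun u => 2 * (degF V u : ℝ) - lam with hk
  have hmain : ∀ r : ℝ, 0 < r → r ≤ s →
      ∑ u ∈ V.erase v, k u * |e u| + k v * (r * |g v|) = 0 := by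
    intro r hr hrs
    have hlt : ∀ u ∈ V.erase v, |r * g u| < |e u| := by
      intro u hu
      rw [abs_mul, abs_of_pos hr]
      exact lt_of_le_of_lt (mul_le_mul_of_nonneg_right hrs (abs_nonneg _)) (hs u hu)
    have hsum : ∀ u ∈ V.erase v, |e u + r * g u| + |e u - r * g u| = 2 * |e u| := by
      intro u hu
      have h1 := abs_lt.1 (hlt u hu)
      rcases le_total 0 (e u) with h0 | h0
      · rw [abs_of_nonneg h0] at h1 ⊢
        rw [abs_of_nonneg (by linarith), abs_of_nonneg (by linarith)]; ring
      · rw [abs_of_nonpos h0] at h1 ⊢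
        rw [abs_of_nonpos (by linarith), abs_of_nonpos (by linarith)]; ring
    have h1 := hid (e + r • g) (by
      intro u hu
      simp only [LinearMap.add_apply, LinearMap.smul_apply, smul_eq_mul]
      by_cases huv : u = v
      · rw [huv, hev, zero_add]; exact mul_ne_zero hr.ne' hg
      · intro h0
        have := hlt u (Finset.mem_erase.2 ⟨huv, hu⟩)
        rw [eq_neg_of_add_eq_zero_left h0, abs_neg] at this
        exact lt_irrefl _ this)
    have h2 := hid (e - r • g) (by
      intro u hu
      simp only [LinearMap.sub_apply, LinearMap.smul_apply, smul_eq_mul]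
      by_cases huv : u = v
      · rw [huv, hev, zero_sub]; exact neg_ne_zero.2 (mul_ne_zero hr.ne' hg)
      · intro h0
        have := hlt u (Finset.mem_erase.2 ⟨huv, hu⟩)
        rw [sub_eq_zero.1 h0] at this
        exact lt_irrefl _ this)
    simp only [LinearMap.sub_apply, LinearMap.add_apply, LinearMap.smul_apply, smul_eq_mul] at h1 h2
    rw [← Finset.add_sum_erase V _ hv, hev] at h1 h2
    have h3 : ∑ u ∈ V.erase v, k u * |e u + r * g u| + ∑ u ∈ V.erase v, k u * |e u - r * g u| =
        2 * ∑ u ∈ V.erase v, k u * |e u| := by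
      rw [← Finset.sum_add_distrib, Finset.mul_sum]
      apply Finset.sum_congr rfl
      intro u hu
      rw [← mul_add, hsum u hu]; ring
    rw [zero_add, abs_mul, abs_of_pos hr] at h1
    rw [zero_sub, abs_neg, abs_mul, abs_of_pos hr] at h2
    simp only [hk] at h3 ⊢
    linarith
  have h1 := hmain s hs0 le_rfl
  have h2 := hmain (s / 2) (by linarith) (by linarith)
  have h3 : k v * (s / 2 * |g v|) = 0 := by linarith
  have h4 : s / 2 * |g v| ≠ 0 := mul_ne_zero (by linarith) (abs_ne_zero.2 hg)
  have h5 : k v = 0 := (mul_eq_zero.1 h3).resolve_right h4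
  simp only [hk] at h5
  linarith
end
end

section
/- Let P ⊂ ℝ^d (d ≥ 3) be a centrally symmetric convex polytope with nonempty interior and let λ ∈ ℝ. Then A(P,z) = λ for every nonzero z ∈ ℝ^d if and only if P is a zonotope with a generator set V of pairwise linearly independent nonzero vectors such that, for every v ∈ V, the number of edges of P parallel to v equals λ. -/
open scoped Pointwise BigOperators

noncomputable section

section helpers

variable {d : ℕ}

def dotL (z : Fin d → ℝ) : (Fin d → ℝ) →L[ℝ] ℝ :=
  LinearMap.toContinuousLinearMap
    { toFun := dotp z
      map_add' := fun x y => by simp [dotp, mul_add, Finset.sum_add_distrib]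
      map_smul' := fun c x => by simp [dotp, Finset.mul_sum, mul_left_comm] }

lemma dotL_apply (z x : Fin d → ℝ) : dotL z x = dotp z x := rfl

lemma dotp_add (z x y : Fin d → ℝ) : dotp z (x + y) = dotp z x + dotp z y := (dotL z).map_add x y
lemma dotp_sub (z x y : Fin d → ℝ) : dotp z (x - y) = dotp z x - dotp z y := (dotL z).map_sub x y
lemma dotp_neg (z x : Fin d → ℝ) : dotp z (-x) = - dotp z x := (dotL z).map_neg x
lemma dotp_smul (z : Fin d → ℝ) (c : ℝ) (x : Fin d → ℝ) : dotp z (c • x) = c * dotp z x :=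
  (dotL z).map_smul c x
lemma dotp_sum {ι : Type*} (z : Fin d → ℝ) (s : Finset ι) (f : ι → Fin d → ℝ) :
    dotp z (∑ i ∈ s, f i) = ∑ i ∈ s, dotp z (f i) := map_sum (dotL z) f s
lemma dotp_cont (z : Fin d → ℝ) : Continuous (dotp z) := (dotL z).continuous
lemma dotp_zero_left (x : Fin d → ℝ) : dotp 0 x = 0 := by simp [dotp]

lemma dotp_self_pos (z : Fin d → ℝ) (hz : z ≠ 0) : 0 < dotp z z := by
  obtain ⟨i, hi⟩ := Function.ne_iff.mp hz
  exact Finset.sum_pos' (fun j _ => mul_self_nonneg _) ⟨i, Finset.mem_univ _, mul_self_pos.mpr hi⟩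

lemma exists_dotp (f : (Fin d → ℝ) →L[ℝ] ℝ) : ∃ z, ∀ x, f x = dotp z x := by
  refine ⟨fun i => f (Pi.single i 1), fun x => ?_⟩
  have hx : x = ∑ i, x i • (Pi.single i (1:ℝ) : Fin d → ℝ) := by
    ext j; simp [Finset.sum_apply, Pi.single_apply]
  conv_lhs => rw [hx]
  simp [dotp, mul_comm]

def face (P : Set (Fin d → ℝ)) (y : Fin d → ℝ) : Set (Fin d → ℝ) :=
  {x ∈ P | ∀ p ∈ P, dotp y p ≤ dotp y x}

lemma face_extreme (P : Set (Fin d → ℝ)) (y : Fin d → ℝ) : IsExtreme ℝ P (face P y) := by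
  refine ⟨fun x hx => hx.1, ?_⟩
  rintro x hx x' hx' q hq ⟨a, b, ha, hb, hab, rfl⟩
  have h1 := hq.2 x hx
  have h2 := hq.2 x' hx'
  rw [dotp_add, dotp_smul, dotp_smul] at h1 h2
  refine ⟨hx, fun p hp => ?_⟩
  have h3 := hq.2 p hp
  rw [dotp_add, dotp_smul, dotp_smul] at h3
  have : b = 1 - a := by linarith
  subst this
  have h4 : dotp y x' ≤ dotp y x := by nlinarith
  nlinarith

lemma face_compact {P : Set (Fin d → ℝ)} (hP : IsCompact P) (y : Fin d → ℝ) :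
    IsCompact (face P y) := by
  refine hP.of_isClosed_subset ?_ (fun x hx => hx.1)
  have : face P y = P ∩ ⋂ p ∈ P, {x | dotp y p ≤ dotp y x} := by
    ext x; simp [face]
  rw [this]
  exact hP.isClosed.inter (isClosed_biInter fun p _ =>
    isClosed_le continuous_const (dotp_cont y))

/-- directions of the minimal face -/
def dirs {P : Set (Fin d → ℝ)} (hc : Convex ℝ P) (p : Fin d → ℝ) (hp : p ∈ P) :
    Submodule ℝ (Fin d → ℝ) where
  carrier := {v | ∃ ε : ℝ, 0 < ε ∧ p + ε • v ∈ P ∧ p - ε • v ∈ P}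
  zero_mem' := ⟨1, one_pos, by simpa using hp, by simpa using hp⟩
  add_mem' := by
    rintro a b ⟨ε, he, h1, h2⟩ ⟨δ, hd, h3, h4⟩
    have hs : 0 < ε + δ := by positivity
    refine ⟨ε * δ / (ε + δ), by positivity, ?_, ?_⟩
    · have := hc h1 h3 (a := δ / (ε + δ)) (b := ε / (ε + δ)) (by positivity) (by positivity)
        (by field_simp; ring)
      convert this using 1
      ext i; simp; field_simp; ring
    · have := hc h2 h4 (a := δ / (ε + δ)) (b := ε / (ε + δ)) (by positivity) (by positivity)
        (by field_simp; ring)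
      convert this using 1
      ext i; simp; field_simp; ring
  smul_mem' := by
    rintro c v ⟨ε, he, h1, h2⟩
    rcases lt_trichotomy c 0 with hc0 | rfl | hc0
    · have hcn : c ≠ 0 := hc0.ne
      refine ⟨ε / (-c), div_pos he (by linarith), ?_, ?_⟩
      · convert h2 using 1
        ext i; simp; field_simp; ring
      · convert h1 using 1
        ext i; simp; field_simp; ring
    · exact ⟨1, one_pos, by simpa using hp, by simpa using hp⟩
    · refine ⟨ε / c, div_pos he hc0, ?_, ?_⟩
      · convert h1 using 1
        ext i; simp; field_simp
      · convert h2 using 1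
        ext i; simp; field_simp

lemma dirs_of_open {P : Set (Fin d → ℝ)} (hc : Convex ℝ P) (p : Fin d → ℝ) (hp : p ∈ P)
    {x x' : Fin d → ℝ} (hx : x ∈ P) (hx' : x' ∈ P) (h : p ∈ openSegment ℝ x x') :
    x' - x ∈ dirs hc p hp := by
  obtain ⟨a, b, ha, hb, hab, rfl⟩ := h
  have hb' : b = 1 - a := by linarith
  subst hb'
  refine ⟨min a (1 - a), by positivity, ?_, ?_⟩
  · refine hc.segment_subset hx hx' ?_
    rw [segment_eq_image]
    refine ⟨1 - a + min a (1 - a), ⟨by positivity, by linarith [min_le_left a (1-a)]⟩, ?_⟩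
    ext i; simp; ring
  · refine hc.segment_subset hx hx' ?_
    rw [segment_eq_image]
    refine ⟨1 - a - min a (1 - a), ⟨by linarith [min_le_right a (1-a)], 
      by have : 0 ≤ min a (1-a) := by positivity
         linarith⟩, ?_⟩
    ext i; simp; ring

lemma dirs_extreme {P : Set (Fin d → ℝ)} (hc : Convex ℝ P) (p : Fin d → ℝ) (hp : p ∈ P) :
    IsExtreme ℝ P {x ∈ P | x - p ∈ dirs hc p hp} := by
  refine ⟨fun x hx => hx.1, ?_⟩
  rintro x hx x' hx' q ⟨hqP, ε, he, h1, h2⟩ hq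
  refine ⟨hx, ?_⟩
  by_cases hqp : q = p
  · subst hqp
    have h3 := dirs_of_open hc q hp hx hx' hq
    obtain ⟨a, b, ha, hb, hab, rfl⟩ := hq
    have hb' : b = 1 - a := by linarith
    subst hb'
    have := (dirs hc _ hp).smul_mem (-(1 - a)) h3
    convert this using 1
    ext i; simp; ring
  -- p in open segment of q and q' := p - ε (q - p)
  set q' := p - ε • (q - p) with hq'
  obtain ⟨a, b, ha, hb, hab, hq⟩ := hq
  have hb' : b = 1 - a := by linarith
  subst hb'
  -- p = (ε q + q')/(1+ε) 
  set τ := ε / (1 + ε) with hτ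
  have hτ0 : 0 < τ := by positivity
  have hτ1 : τ < 1 := by rw [hτ, div_lt_one (by positivity)]; linarith
  have hpe : p = τ • q + (1 - τ) • q' := by
    rw [hq', hτ]; ext i; simp; field_simp; ring
  have hta : τ * a < 1 := by nlinarith
  set r := (1 - τ * a)⁻¹ • ((τ * (1 - a)) • x' + (1 - τ) • q') with hr
  have hne : (1 - τ * a) ≠ 0 := by linarith
  have hpos : 0 < 1 - τ * a := by linarith
  have hrP : r ∈ P := by
    have := hc hx' h2 (a := τ * (1 - a) / (1 - τ * a)) (b := (1 - τ) / (1 - τ * a))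
      (by positivity) (div_nonneg (by linarith) hpos.le) (by field_simp; ring)
    convert this using 1
    rw [hr]; ext i; simp; field_simp; try ring
  have hop : p = (τ * a) • x + (1 - τ * a) • r := by
    rw [hr, smul_smul, mul_inv_cancel₀ hne, one_smul]
    conv_lhs => rw [hpe, ← hq]
    ext i; simp; ring
  have h3 := dirs_of_open hc p hp hx hrP ⟨τ * a, 1 - τ * a, by positivity, hpos, by ring, hop.symm⟩
  have := (dirs hc _ hp).smul_mem (-(1 - τ * a)) h3
  convert this using 1
  conv_lhs => rw [hop]
  ext i; simp; ring

lemma exists_lt_of_int {P : Set (Fin d → ℝ)} (hint : (interior P).Nonempty) {z : Fin d → ℝ}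
    (hz : z ≠ 0) : ∃ x ∈ P, ∃ x' ∈ P, dotp z x < dotp z x' := by
  obtain ⟨x, hx⟩ := hint
  have hcont : Continuous fun τ : ℝ => x + τ • z := by fun_prop
  have h1 : ∀ᶠ τ in nhds (0:ℝ), x + τ • z ∈ interior P :=
    hcont.continuousAt.eventually_mem (isOpen_interior.mem_nhds (by simpa using hx))
  obtain ⟨ε, he, h2⟩ := Metric.eventually_nhds_iff.mp h1
  refine ⟨x, interior_subset hx, x + (ε / 2) • z, interior_subset (h2 ?_), ?_⟩
  · rw [Real.dist_eq, sub_zero, abs_of_pos (by positivity)]; linarith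
  · rw [dotp_add, dotp_smul]
    have := dotp_self_pos z hz
    nlinarith [mul_pos he this]

lemma not_segment (hd : 3 ≤ d) {P : Set (Fin d → ℝ)} (hint : (interior P).Nonempty)
    (u w : Fin d → ℝ) : P ≠ segment ℝ u w := by
  rintro rfl
  have : LinearMap.ker (dotL (w - u)).toLinearMap ≠ ⊥ := by
    apply LinearMap.ker_ne_bot_of_finrank_lt
    simp; omega
  obtain ⟨z, hz, hz0⟩ := Submodule.exists_mem_ne_zero_of_ne_bot this
  obtain ⟨x, hx, x', hx', hlt⟩ := exists_lt_of_int hint hz0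
  have hz1 : dotp z (w - u) = 0 := by
    have : dotp (w - u) z = 0 := hz
    rw [← this]; simp [dotp, mul_comm]
  rw [segment_eq_image'] at hx hx'
  obtain ⟨θ, -, rfl⟩ := hx
  obtain ⟨θ', -, rfl⟩ := hx'
  simp [dotp_add, dotp_smul, hz1] at hlt

lemma exists_edge (hd : 3 ≤ d) (s : Finset (Fin d → ℝ)) {P : Set (Fin d → ℝ)}
    (hP : P = convexHull ℝ (s : Set (Fin d → ℝ)))
    (hint : (interior P).Nonempty) (z : Fin d → ℝ) (t : ℝ) (ht : ∀ g ∈ s, dotp z g ≠ t)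
    (p : Fin d → ℝ) (hp : p ∈ Set.extremePoints ℝ (P ∩ {x | dotp z x = t})) :
    ∃ u w y : Fin d → ℝ, u ≠ w ∧ y ≠ 0 ∧ segment ℝ u w = face P y ∧ p ∈ segment ℝ u w := by
  have hc : Convex ℝ P := hP ▸ convex_convexHull ℝ _
  have hcomp : IsCompact P := hP ▸ Set.Finite.isCompact_convexHull ℝ s.finite_toSet
  have hpP : p ∈ P := hp.1.1
  have hpt : dotp z p = t := hp.1.2
  set D := dirs hc p hpP with hD
  have hDz : ∀ v ∈ D, dotp z v = 0 → v = 0 := by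
    rintro v ⟨ε, he, h1, h2⟩ hv
    have := hp.2 (x₁ := p + ε • v) ⟨h1, by simp [dotp_add, dotp_smul, hv, hpt]⟩
      (x₂ := p - ε • v) ⟨h2, by simp [dotp_sub, dotp_smul, hv, hpt]⟩
      ⟨1/2, 1/2, by norm_num, by norm_num, by norm_num, by ext i; simp; ring⟩
    have h3 : ε • v = 0 := by simpa using this
    exact (smul_eq_zero.mp h3).resolve_left he.ne'
  -- p is not extreme in P
  have hnext : p ∉ Set.extremePoints ℝ P := by
    intro h
    have : p ∈ (s : Set (Fin d → ℝ)) := by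
      subst hP
      exact extremePoints_convexHull_subset h
    exact ht p this hpt
  obtain ⟨v, hvD, hv0⟩ : ∃ v ∈ D, v ≠ 0 := by
    by_contra hcon
    push Not at hcon
    apply hnext
    rw [mem_extremePoints]
    refine ⟨hpP, fun x hx x' hx' h => ?_⟩
    have h1 := hcon _ (dirs_of_open hc p hpP hx hx' h)
    have h2 : x' = x := sub_eq_zero.mp h1
    subst h2
    rw [openSegment_same] at h
    simp at h
    exact ⟨h.symm, h.symm⟩
  have hzv : dotp z v ≠ 0 := fun h => hv0 (hDz v hvD h)
  have hDspan : ∀ x ∈ D, ∃ c : ℝ, x = c • v := by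
    intro x hx
    refine ⟨dotp z x / dotp z v, ?_⟩
    have := hDz (x - (dotp z x / dotp z v) • v) (D.sub_mem hx (D.smul_mem _ hvD))
      (by rw [dotp_sub, dotp_smul]; field_simp; ring)
    exact sub_eq_zero.mp this
  -- separating functional
  have hsP : ∀ g ∈ s, g ∈ P := fun g hg => hP ▸ subset_convexHull ℝ _ hg
  set G : Set (Fin d → ℝ) := {g | g ∈ s ∧ g - p ∉ D} with hG
  have hGfin : G.Finite := s.finite_toSet.subset fun g hg => hg.1
  set M : Set (Fin d → ℝ) := {x | x - p ∈ D} with hM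
  have hMc : Convex ℝ M := by
    intro x hx x' hx' a b ha hb hab
    have := D.add_mem (D.smul_mem a hx) (D.smul_mem b hx')
    show _ - p ∈ D
    convert this using 1
    have : a = 1 - b := by linarith
    subst this
    ext i; simp; ring
  have hMcl : IsClosed M :=
    (Submodule.closed_of_finiteDimensional D).preimage (continuous_id.sub continuous_const)
  have hKsub : convexHull ℝ G ⊆ P \ {x ∈ P | x - p ∈ D} := by
    apply convexHull_min
    · rintro g ⟨hg, hgD⟩
      exact ⟨hsP g hg, fun h => hgD h.2⟩
    · exact (dirs_extreme hc p hpP).convex_sdiff hc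
  have hdisj : Disjoint (convexHull ℝ G) M := by
    rw [Set.disjoint_left]
    intro x hx hxM
    exact (hKsub hx).2 ⟨(hKsub hx).1, hxM⟩
  obtain ⟨f, a, b, hfa, hab, hfb⟩ := geometric_hahn_banach_compact_closed
    (convex_convexHull ℝ G) (Set.Finite.isCompact_convexHull ℝ hGfin) hMc hMcl hdisj
  obtain ⟨y, hy⟩ := exists_dotp f
  simp only [hy] at hfa hfb
  have hpM : p ∈ M := by simp [hM]
  have hyD : ∀ x ∈ D, dotp y x = 0 := by
    intro x hx
    by_contra hne
    have h1 : p + ((b - dotp y p) / dotp y x) • x ∈ M := by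
      show _ - p ∈ D
      simpa using D.smul_mem _ hx
    have h2 := hfb _ h1
    rw [dotp_add, dotp_smul, div_mul_cancel₀ _ hne] at h2
    linarith
  have hmain : ∀ x ∈ P, dotp y x ≤ dotp y p ∧ (dotp y x = dotp y p → x - p ∈ D) := by
    have : P ⊆ {x | dotp y x ≤ dotp y p ∧ (dotp y x = dotp y p → x - p ∈ D)} := by
      conv_lhs => rw [hP]
      apply convexHull_min
      · intro g hg
        by_cases hgD : g - p ∈ D
        · have := hyD _ hgD
          rw [dotp_sub] at this
          exact ⟨by linarith, fun _ => hgD⟩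
        · have h1 := hfa g (subset_convexHull ℝ _ ⟨hg, hgD⟩)
          have h2 := hfb p hpM
          exact ⟨by linarith, fun h => by linarith⟩
      · rintro x ⟨hx1, hx2⟩ x' ⟨hx1', hx2'⟩ a b ha hb hab
        have ha' : a = 1 - b := by linarith
        show dotp y _ ≤ _ ∧ (dotp y _ = _ → _)
        rw [dotp_add, dotp_smul, dotp_smul]
        refine ⟨by subst ha'; nlinarith, fun h => ?_⟩
        rcases eq_or_lt_of_le ha with h0 | h0
        · have hb1 : b = 1 := by linarith
          subst h0; subst hb1
          simpa using hx2' (by simpa using h)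
        rcases eq_or_lt_of_le hb with h0' | h0'
        · have hb1 : a = 1 := by linarith
          subst h0'; subst hb1
          simpa using hx2 (by simpa using h)
        refine hMc (hx2 ?_) (hx2' ?_) ha hb hab
        · subst ha'; nlinarith
        · subst ha'; nlinarith
    exact this
  have hface : face P y = {x ∈ P | x - p ∈ D} := by
    ext x
    constructor
    · rintro ⟨hx, h⟩
      exact ⟨hx, (hmain x hx).2 (le_antisymm (hmain x hx).1 (h p hpP))⟩
    · rintro ⟨hx, h⟩
      refine ⟨hx, fun q hq => ?_⟩
      have := hyD _ h
      rw [dotp_sub] at this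
      linarith [(hmain q hq).1]
  -- the interval
  set T : Set ℝ := {τ | p + τ • v ∈ P} with hT
  have hTc : IsCompact T := by
    have : Topology.IsClosedEmbedding fun τ : ℝ => p + τ • v :=
      (Homeomorph.addLeft p).isClosedEmbedding.comp (isClosedEmbedding_smul_left hv0)
    exact this.isCompact_preimage hcomp
  have hTconv : Convex ℝ T := by
    intro x hx x' hx' a b ha hb hab
    have := hc hx hx' ha hb hab
    show p + _ ∈ P
    convert this using 1
    have : a = 1 - b := by linarith
    subst this
    ext i; simp; ring
  obtain ⟨ε, he, h1, h2⟩ := hvD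
  have hTconn : IsConnected T := ⟨⟨ε, h1⟩, hTconv.isPreconnected⟩
  have hTI := eq_Icc_of_connected_compact hTconn hTc
  set α := sInf T
  set β := sSup T
  have e1 : ε ∈ Set.Icc α β := hTI ▸ h1
  have e2 : -ε ∈ Set.Icc α β := hTI ▸ (show p + (-ε) • v ∈ P by rw [neg_smul, ← sub_eq_add_neg]; exact h2)
  have hαβ : α < β := by linarith [e1.2, e2.1]
  have hseg : segment ℝ (p + α • v) (p + β • v) = face P y := by
    rw [hface]
    ext x
    constructor
    · rintro ⟨a, b, ha, hb, hab, rfl⟩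
      have h3 : a * α + b * β ∈ T := by
        rw [hTI]
        have : a = 1 - b := by linarith
        subst this
        constructor <;> nlinarith
      have h4 : a • (p + α • v) + b • (p + β • v) = p + (a * α + b * β) • v := by
        have : a = 1 - b := by linarith
        subst this
        ext i; simp; ring
      rw [h4]
      exact ⟨h3, by simpa using D.smul_mem _ ⟨ε, he, h1, h2⟩⟩
    · rintro ⟨hx, hxD⟩
      obtain ⟨c, hc'⟩ := hDspan _ hxD
      have hxe : x = p + c • v := by rw [← hc']; simp
      have hcT : c ∈ Set.Icc α β := by rw [← hTI]; show p + c • v ∈ P; rwa [← hxe]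
      have hne : β - α ≠ 0 := by linarith
      refine ⟨(β - c) / (β - α), (c - α) / (β - α), div_nonneg (by linarith [hcT.2]) (by linarith),
        div_nonneg (by linarith [hcT.1]) (by linarith), by field_simp; ring, ?_⟩
      rw [hxe]
      ext i; simp; field_simp; ring
  refine ⟨p + α • v, p + β • v, y, ?_, ?_, hseg, ?_⟩
  · intro h
    have : (α - β) • v = 0 := by
      have := add_left_cancel h
      rw [sub_smul, this, sub_self]
    rcases smul_eq_zero.mp this with h | h
    · linarith
    · exact hv0 h
  · rintro rfl
    apply not_segment hd hint (p + α • v) (p + β • v)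
    rw [hseg]
    ext x; simp [face, dotp_zero_left]
  · rw [hseg, hface]
    exact ⟨hpP, by simp⟩

def edgeSet (P : Set (Fin d → ℝ)) : Set (Set (Fin d → ℝ)) :=
  {e | ∃ u w : Fin d → ℝ, u ≠ w ∧ e = segment ℝ u w ∧ ∃ y : Fin d → ℝ, y ≠ 0 ∧ e = face P y}

lemma left_extreme (u w : Fin d → ℝ) (h : u ≠ w) : u ∈ Set.extremePoints ℝ (segment ℝ u w) := by
  refine ⟨left_mem_segment ℝ u w, ?_⟩
  intro x hx x' hx' hu
  rw [segment_eq_image'] at hx hx'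
  obtain ⟨θ, hθ, rfl⟩ := hx
  obtain ⟨θ', hθ', rfl⟩ := hx'
  obtain ⟨a, b, ha, hb, hab, he⟩ := hu
  have h1 : (a * θ + b * θ') • (w - u) = 0 := by
    have hb' : b = 1 - a := by linarith
    subst hb'
    have : (a * θ + (1 - a) * θ') • (w - u) =
      (a • (u + θ • (w - u)) + (1 - a) • (u + θ' • (w - u))) - u := by
      ext i; simp; ring
    rw [this, he, sub_self]
  have h2 := (smul_eq_zero.mp h1).resolve_right (sub_ne_zero.mpr h.symm)
  have h3 : θ = 0 := by
    have := mul_nonneg ha.le hθ.1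
    have := mul_nonneg hb.le hθ'.1
    have : a * θ = 0 := by linarith
    exact (mul_eq_zero.mp this).resolve_left ha.ne'
  simp [h3]

lemma right_extreme (u w : Fin d → ℝ) (h : u ≠ w) : w ∈ Set.extremePoints ℝ (segment ℝ u w) := by
  rw [segment_symm]; exact left_extreme w u h.symm

lemma extreme_segment_sub (u w : Fin d → ℝ) :
    Set.extremePoints ℝ (segment ℝ u w) ⊆ {u, w} := by
  rw [← convexHull_pair]; exact extremePoints_convexHull_subset

lemma seg_eq {u w u' w' : Fin d → ℝ} (h : u ≠ w) (he : segment ℝ u w = segment ℝ u' w') :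
    (u = u' ∧ w = w') ∨ (u = w' ∧ w = u') := by
  have h1 := left_extreme u w h
  have h2 := right_extreme u w h
  rw [he] at h1 h2
  have h3 := extreme_segment_sub _ _ h1
  have h4 := extreme_segment_sub _ _ h2
  simp at h3 h4
  rcases h3 with h3 | h3 <;> rcases h4 with h4 | h4
  · exact absurd (h3.trans h4.symm) h
  · exact Or.inl ⟨h3, h4⟩
  · exact Or.inr ⟨h3, h4⟩
  · exact absurd (h3.trans h4.symm) h

lemma edge_ends (s : Finset (Fin d → ℝ)) {P : Set (Fin d → ℝ)}
    (hP : P = convexHull ℝ (s : Set (Fin d → ℝ))) {u w y : Fin d → ℝ} (h : u ≠ w)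
    (hf : segment ℝ u w = face P y) : u ∈ s ∧ w ∈ s := by
  have h1 : IsExtreme ℝ P (segment ℝ u w) := hf ▸ face_extreme P y
  have h2 := h1.extremePoints_subset_extremePoints
  have h3 : Set.extremePoints ℝ P ⊆ (s : Set (Fin d → ℝ)) := by
    subst hP
    exact extremePoints_convexHull_subset
  exact ⟨h3 (h2 (left_extreme u w h)), h3 (h2 (right_extreme u w h))⟩

lemma edgeSet_finite (s : Finset (Fin d → ℝ)) {P : Set (Fin d → ℝ)}
    (hP : P = convexHull ℝ (s : Set (Fin d → ℝ))) : (edgeSet P).Finite := by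
  have : edgeSet P ⊆ (fun q : (Fin d → ℝ) × (Fin d → ℝ) => segment ℝ q.1 q.2) ''
      ((s ×ˢ s : Finset _) : Set ((Fin d → ℝ) × (Fin d → ℝ))) := by
    rintro e ⟨u, w, huw, rfl, y, -, hy⟩
    have := edge_ends s hP huw hy
    exact ⟨(u, w), by simpa using this, rfl⟩
  exact (((s ×ˢ s : Finset _).finite_toSet).image _).subset this

lemma nVert_eq (hd : 3 ≤ d) (s : Finset (Fin d → ℝ)) {P : Set (Fin d → ℝ)}
    (hP : P = convexHull ℝ (s : Set (Fin d → ℝ)))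
    (hint : (interior P).Nonempty)
    {ι : Type} [Fintype ι] (e : ι → Set (Fin d → ℝ)) (U W Y : ι → Fin d → ℝ)
    (hinj : Function.Injective e) (hUW : ∀ i, U i ≠ W i) (hseg : ∀ i, e i = segment ℝ (U i) (W i))
    (hface : ∀ i, e i = face P (Y i)) (hsurj : ∀ e' ∈ edgeSet P, ∃ i, e i = e')
    (z : Fin d → ℝ) (t : ℝ) (ht : ∀ g ∈ s, dotp z g ≠ t) :
    (nVert (P ∩ {x | dotp z x = t}) : ℝ) =
      ∑ i, Set.indicator (Set.uIoc (dotp z (U i)) (dotp z (W i))) (fun _ => (1:ℝ)) t := by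
  classical
  have hends : ∀ i, U i ∈ s ∧ W i ∈ s := fun i =>
    edge_ends s hP (hUW i) ((hseg i).symm.trans (hface i))
  set C : Set ι := {i | t ∈ Set.uIoc (dotp z (U i)) (dotp z (W i))} with hC
  set θ : ι → ℝ := fun i => (t - dotp z (U i)) / (dotp z (W i) - dotp z (U i)) with hθ
  set q : ι → Fin d → ℝ := fun i => (1 - θ i) • U i + θ i • W i with hq
  have hθm : ∀ i ∈ C, 0 < θ i ∧ θ i < 1 := by
    intro i hi
    have h1 := ht _ (hends i).1
    have h2 := ht _ (hends i).2
    simp only [hC, Set.mem_ofPred_eq, Set.mem_uIoc] at hi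
    simp only [hθ]
    rcases hi with hi | hi
    · have h3 : t < dotp z (W i) := lt_of_le_of_ne hi.2 h2.symm
      exact ⟨div_pos (by linarith) (by linarith), by rw [div_lt_one (by linarith)]; linarith⟩
    · have h3 : t < dotp z (U i) := lt_of_le_of_ne hi.2 h1.symm
      exact ⟨div_pos_of_neg_of_neg (by linarith) (by linarith),
        by rw [div_lt_one_of_neg (by linarith)]; linarith⟩
  have hqo : ∀ i ∈ C, q i ∈ openSegment ℝ (U i) (W i) := fun i hi =>
    ⟨1 - θ i, θ i, by linarith [(hθm i hi).2], (hθm i hi).1, by ring, rfl⟩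
  have hext : ∀ i, IsExtreme ℝ P (e i) := fun i => hface i ▸ face_extreme P (Y i)
  have hUe : ∀ i, U i ∈ e i := fun i => hseg i ▸ left_mem_segment ℝ _ _
  have hWe : ∀ i, W i ∈ e i := fun i => hseg i ▸ right_mem_segment ℝ _ _
  have hqe : ∀ i ∈ C, q i ∈ e i := fun i hi => hseg i ▸ openSegment_subset_segment ℝ _ _ (hqo i hi)
  have hsub : ∀ i ∈ C, ∀ j, q i ∈ e j → e i ⊆ e j := by
    intro i hi j hj
    have h1 := (hext j).2 ((hext i).1 (hUe i)) ((hext i).1 (hWe i)) hj (hqo i hi)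
    have h2 := (hext j).2 ((hext i).1 (hWe i)) ((hext i).1 (hUe i)) hj
      (by rw [openSegment_symm]; exact hqo i hi)
    rw [hseg i]
    have hcj : Convex ℝ (e j) := by rw [hseg j]; exact convex_segment _ _
    exact hcj.segment_subset h1 h2
  have hqinj : Set.InjOn q C := by
    intro i hi j hj hij
    apply hinj
    apply Set.Subset.antisymm
    · exact hsub i hi j (hij ▸ hqe j hj)
    · exact hsub j hj i (hij ▸ hqe i hi)
  -- points of e i on the hyperplane
  have hpt : ∀ i, ∀ x ∈ e i, dotp z x = t → i ∈ C ∧ x = q i := by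
    intro i x hx hxt
    have h1 := ht _ (hends i).1
    have h2 := ht _ (hends i).2
    rw [hseg i] at hx
    obtain ⟨a, b, ha, hb, hab, rfl⟩ := hx
    rw [dotp_add, dotp_smul, dotp_smul] at hxt
    have ha' : a = 1 - b := by linarith
    subst ha'
    have hne : dotp z (W i) - dotp z (U i) ≠ 0 := by
      intro h0
      apply h1
      have : dotp z (W i) = dotp z (U i) := by linarith
      rw [this] at hxt
      linarith
    have hbθ : b = θ i := by
      simp only [hθ]
      rw [eq_div_iff hne]
      linarith
    have hiC : i ∈ C := by
      simp only [hC, Set.mem_ofPred_eq, Set.mem_uIoc]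
      rcases lt_or_gt_of_ne hne with h | h
      · right
        constructor
        · refine lt_of_le_of_ne ?_ h2
          nlinarith
        · nlinarith
      · left
        constructor
        · refine lt_of_le_of_ne ?_ h1
          nlinarith
        · nlinarith
    exact ⟨hiC, by simp only [hq]; rw [hbθ]⟩
  have hqz : ∀ i ∈ C, dotp z (q i) = t := by
    intro i hi
    have hne : dotp z (W i) - dotp z (U i) ≠ 0 := by
      intro h0
      have := (hθm i hi).1
      simp only [hθ, h0, div_zero] at this
      exact lt_irrefl _ this
    simp only [hq, hθ, dotp_add, dotp_smul]
    field_simp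
    ring
  have himg : Set.extremePoints ℝ (P ∩ {x | dotp z x = t}) = q '' C := by
    ext p
    constructor
    · intro hp
      obtain ⟨u, w, y, huw, hy, hsf, hpm⟩ := exists_edge hd s hP hint z t ht p hp
      obtain ⟨i, hi⟩ := hsurj (segment ℝ u w) ⟨u, w, huw, rfl, y, hy, hsf⟩
      have := hpt i p (hi ▸ hpm) hp.1.2
      exact ⟨i, this.1, this.2.symm⟩
    · rintro ⟨i, hi, rfl⟩
      refine ⟨⟨(hext i).1 (hqe i hi), hqz i hi⟩, ?_⟩
      rintro x ⟨hx, hxt⟩ x' ⟨hx', hxt'⟩ h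
      have h1 := (hext i).2 hx hx' (hqe i hi) h
      exact (hpt i x h1 hxt).2
  have : nVert (P ∩ {x | dotp z x = t}) = (Finset.univ.filter (fun i => i ∈ C)).card := by
    rw [nVert, himg, Set.ncard_image_of_injOn hqinj, ← Set.ncard_coe_finset]
    congr 1
    ext i; simp
  rw [this, Finset.card_filter]
  push_cast
  refine Finset.sum_congr rfl fun i _ => ?_
  simp [Set.indicator_apply, hC]

lemma dotp_image_bdd {P : Set (Fin d → ℝ)} (hcomp : IsCompact P) (z : Fin d → ℝ) :
    BddBelow (dotp z '' P) ∧ BddAbove (dotp z '' P) :=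
  ⟨(hcomp.image (dotp_cont z)).bddBelow, (hcomp.image (dotp_cont z)).bddAbove⟩

lemma tMin_le {P : Set (Fin d → ℝ)} (hcomp : IsCompact P) (z : Fin d → ℝ) {x : Fin d → ℝ}
    (hx : x ∈ P) : tMin P z ≤ dotp z x :=
  csInf_le (dotp_image_bdd hcomp z).1 ⟨x, hx, rfl⟩

lemma le_tMax {P : Set (Fin d → ℝ)} (hcomp : IsCompact P) (z : Fin d → ℝ) {x : Fin d → ℝ}
    (hx : x ∈ P) : dotp z x ≤ tMax P z :=
  le_csSup (dotp_image_bdd hcomp z).2 ⟨x, hx, rfl⟩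

lemma width_pos {P : Set (Fin d → ℝ)} (hcomp : IsCompact P) (hint : (interior P).Nonempty)
    {z : Fin d → ℝ} (hz : z ≠ 0) : 0 < tMax P z - tMin P z := by
  obtain ⟨x, hx, x', hx', h⟩ := exists_lt_of_int hint hz
  linarith [tMin_le hcomp z hx, le_tMax hcomp z hx']

lemma edge_formula (hd : 3 ≤ d) {P : Set (Fin d → ℝ)}
    (hpoly : IsPolytope P) (hint : (interior P).Nonempty) :
    ∃ (ι : Type) (_ : Fintype ι) (e : ι → Set (Fin d → ℝ)) (U W Y : ι → Fin d → ℝ),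
      Function.Injective e ∧ (∀ i, U i ≠ W i) ∧ (∀ i, e i = segment ℝ (U i) (W i)) ∧
      (∀ i, Y i ≠ 0) ∧ (∀ i, e i = face P (Y i)) ∧ (∀ e' ∈ edgeSet P, ∃ i, e i = e') ∧
      Nonempty ι ∧
      ∀ z, z ≠ 0 → avgVert P z * (tMax P z - tMin P z) = ∑ i, |dotp z (W i - U i)| := by
  obtain ⟨s, hP⟩ := hpoly
  have hcomp : IsCompact P := hP ▸ Set.Finite.isCompact_convexHull ℝ s.finite_toSet
  have hc : Convex ℝ P := hP ▸ convex_convexHull ℝ _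
  have hfin := edgeSet_finite s hP
  have : Fintype (edgeSet P) := hfin.fintype
  choose U W hUW hseg Y hY hface using fun i : edgeSet P => i.2
  have hsurj : ∀ e' ∈ edgeSet P, ∃ i : edgeSet P, (i : Set (Fin d → ℝ)) = e' :=
    fun e' h => ⟨⟨e', h⟩, rfl⟩
  have hends : ∀ i, U i ∈ P ∧ W i ∈ P := fun i => by
    have h1 : (i : Set (Fin d → ℝ)) ⊆ P := by
      rw [hface i]; exact fun x hx => hx.1
    refine ⟨h1 ?_, h1 ?_⟩
    · rw [hseg i]; exact left_mem_segment ℝ _ _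
    · rw [hseg i]; exact right_mem_segment ℝ _ _
  refine ⟨edgeSet P, this, fun i => i, U, W, Y, Subtype.val_injective, hUW, hseg, hY, hface, hsurj,
    ?_, ?_⟩
  · -- nonempty
    let z : Fin d → ℝ := fun _ => 1
    have hz : z ≠ 0 := fun h => by simpa [z] using congrFun h ⟨0, by omega⟩
    obtain ⟨x, hx, x', hx', hlt⟩ := exists_lt_of_int hint hz
    obtain ⟨t, ht, htn⟩ := ((Set.Ioo_infinite hlt).sdiff (s.finite_toSet.image (dotp z))).nonempty
    have hts : ∀ g ∈ s, dotp z g ≠ t := fun g hg h => htn ⟨g, hg, h⟩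
    have hconv : Set.OrdConnected (dotp z '' P) := by
      have := (hc.isPreconnected.image (dotp z) (dotp_cont z).continuousOn)
      exact this.ordConnected
    obtain ⟨p, hp, hpt⟩ := hconv.out ⟨x, hx, rfl⟩ ⟨x', hx', rfl⟩ ⟨ht.1.le, ht.2.le⟩
    have hSc : IsCompact (P ∩ {x | dotp z x = t}) :=
      hcomp.inter_right (isClosed_eq (dotp_cont z) continuous_const)
    obtain ⟨p', hp'⟩ := hSc.extremePoints_nonempty ⟨p, hp, hpt⟩
    obtain ⟨u, w, y, huw, hy, hsf, -⟩ := exists_edge hd s hP hint z t hts p' hp'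
    exact ⟨⟨segment ℝ u w, u, w, huw, rfl, y, hy, hsf⟩⟩
  · intro z hz
    have hw := width_pos hcomp hint hz
    rw [avgVert, mul_comm, ← mul_assoc, mul_inv_cancel₀ hw.ne', one_mul]
    have hae : ∀ᵐ t ∂MeasureTheory.volume, t ∈ Set.uIoc (tMin P z) (tMax P z) →
        (nVert (P ∩ {x | dotp z x = t}) : ℝ) =
        ∑ i : edgeSet P, Set.indicator (Set.uIoc (dotp z (U i)) (dotp z (W i)))
          (fun _ => (1:ℝ)) t := by
      have h0 : MeasureTheory.volume (dotp z '' (s : Set (Fin d → ℝ))) = 0 :=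
        (s.finite_toSet.image _).measure_zero _
      filter_upwards [MeasureTheory.compl_mem_ae_iff.mpr h0] with t ht _
      exact nVert_eq hd s hP hint (fun i : edgeSet P => i) U W Y Subtype.val_injective hUW hseg
        hface hsurj z t (fun g hg h => ht ⟨g, hg, h⟩)
    rw [intervalIntegral.integral_congr_ae hae, intervalIntegral.integral_of_le (by linarith),
      MeasureTheory.integral_finsetSum]
    · refine Finset.sum_congr rfl fun i _ => ?_
      have hsub : Set.uIoc (dotp z (U i)) (dotp z (W i)) ⊆ Set.Ioc (tMin P z) (tMax P z) := by
        intro t ht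
        rw [Set.mem_uIoc] at ht
        have h1 := tMin_le hcomp z (hends i).1
        have h2 := tMin_le hcomp z (hends i).2
        have h3 := le_tMax hcomp z (hends i).1
        have h4 := le_tMax hcomp z (hends i).2
        rcases ht with ht | ht
        · exact ⟨by linarith [ht.1], by linarith [ht.2]⟩
        · exact ⟨by linarith [ht.1], by linarith [ht.2]⟩
      rw [MeasureTheory.setIntegral_indicator measurableSet_uIoc,
        Set.inter_eq_right.mpr hsub, dotp_sub]
      simp [Set.uIoc, MeasureTheory.measureReal_def]
      exact max_sub_min_eq_abs _ _
    · intro i _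
      exact (MeasureTheory.integrable_const (1:ℝ)).indicator measurableSet_uIoc

lemma mem_zono_s3 {n : ℕ} (a : Fin n → Fin d → ℝ) (x p : Fin d → ℝ) :
    p ∈ ({x} + ∑ i, segment ℝ 0 (a i) : Set (Fin d → ℝ)) ↔
      ∃ τ : Fin n → ℝ, (∀ j, 0 ≤ τ j ∧ τ j ≤ 1) ∧ p = x + ∑ j, τ j • a j := by
  rw [Set.singleton_add, Set.mem_image]
  constructor
  · rintro ⟨q, hq, rfl⟩
    rw [Set.mem_fintype_sum] at hq
    obtain ⟨g, hg, rfl⟩ := hq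
    have : ∀ i, ∃ τ : ℝ, (0 ≤ τ ∧ τ ≤ 1) ∧ g i = τ • a i := by
      intro i
      have := hg i
      rw [segment_eq_image'] at this
      obtain ⟨θ, hθ, h⟩ := this
      exact ⟨θ, ⟨hθ.1, hθ.2⟩, by rw [← h]; simp⟩
    choose τ h1 h2 using this
    exact ⟨τ, h1, by simp [h2]⟩
  · rintro ⟨τ, h, rfl⟩
    refine ⟨_, ?_, rfl⟩
    rw [Set.mem_fintype_sum]
    refine ⟨fun j => τ j • a j, fun j => ?_, rfl⟩
    rw [segment_eq_image']
    exact ⟨τ j, ⟨(h j).1, (h j).2⟩, by simp⟩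

lemma zono_convex {n : ℕ} (a : Fin n → Fin d → ℝ) (x : Fin d → ℝ) :
    Convex ℝ ({x} + ∑ i, segment ℝ 0 (a i) : Set (Fin d → ℝ)) := by
  refine (convex_singleton x).add ?_
  exact convex_sum _ fun i _ => convex_segment _ _

lemma zono_compact {n : ℕ} (a : Fin n → Fin d → ℝ) (x : Fin d → ℝ) :
    IsCompact ({x} + ∑ i, segment ℝ 0 (a i) : Set (Fin d → ℝ)) := by
  have : ({x} + ∑ i, segment ℝ 0 (a i) : Set (Fin d → ℝ)) =
      (fun τ : Fin n → ℝ => x + ∑ j, τ j • a j) '' Set.Icc 0 1 := by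
    ext p
    rw [mem_zono_s3]
    constructor
    · rintro ⟨τ, h, rfl⟩
      exact ⟨τ, ⟨fun j => (h j).1, fun j => (h j).2⟩, rfl⟩
    · rintro ⟨τ, h, rfl⟩
      exact ⟨τ, fun j => ⟨h.1 j, h.2 j⟩, rfl⟩
  rw [this]
  exact isCompact_Icc.image (by fun_prop)

lemma dotp_zono {n : ℕ} (a : Fin n → Fin d → ℝ) (x z : Fin d → ℝ) (τ : Fin n → ℝ) :
    dotp z (x + ∑ j, τ j • a j) = dotp z x + ∑ j, τ j * dotp z (a j) := by
  rw [dotp_add, dotp_sum]; simp [dotp_smul]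

lemma zono_tMax {n : ℕ} (a : Fin n → Fin d → ℝ) (x z : Fin d → ℝ) :
    tMax ({x} + ∑ i, segment ℝ 0 (a i) : Set (Fin d → ℝ)) z =
      dotp z x + ∑ j, max 0 (dotp z (a j)) := by
  apply IsGreatest.csSup_eq
  constructor
  · refine ⟨_, (mem_zono_s3 a x _).mpr ⟨fun j => if 0 ≤ dotp z (a j) then 1 else 0, fun j => ?_, rfl⟩, ?_⟩
    · dsimp only; split_ifs <;> simp
    · rw [dotp_zono]
      congr 1
      refine Finset.sum_congr rfl fun j _ => ?_
      split_ifs with h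
      · simp [h]
      · simp [le_of_not_ge h]
  · rintro _ ⟨p, hp, rfl⟩
    obtain ⟨τ, h, rfl⟩ := (mem_zono_s3 a x p).mp hp
    rw [dotp_zono]
    gcongr with j
    rcases le_total 0 (dotp z (a j)) with h0 | h0
    · rw [max_eq_right h0]; nlinarith [h j]
    · rw [max_eq_left h0]; nlinarith [h j]

lemma tMin_eq_s3 (P : Set (Fin d → ℝ)) (z : Fin d → ℝ) : tMin P z = - tMax P (-z) := by
  rw [tMin, tMax, Real.sInf_def]
  congr 2
  ext r
  simp only [Set.mem_neg, Set.mem_image]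
  have : ∀ x, dotp (-z) x = - dotp z x := fun x => by simp [dotp]
  simp only [this]
  constructor
  · rintro ⟨x, hx, h⟩; exact ⟨x, hx, by linarith⟩
  · rintro ⟨x, hx, h⟩; exact ⟨x, hx, by linarith⟩

lemma dotp_neg_left (z x : Fin d → ℝ) : dotp (-z) x = - dotp z x := by simp [dotp]

lemma zono_width {n : ℕ} (a : Fin n → Fin d → ℝ) (x z : Fin d → ℝ) :
    tMax ({x} + ∑ i, segment ℝ 0 (a i) : Set (Fin d → ℝ)) z -
     tMin ({x} + ∑ i, segment ℝ 0 (a i) : Set (Fin d → ℝ)) z = ∑ j, |dotp z (a j)| := by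
  rw [tMin_eq_s3, zono_tMax, zono_tMax, dotp_neg_left]
  have : ∀ j, |dotp z (a j)| = max 0 (dotp z (a j)) + max 0 (dotp (-z) (a j)) := by
    intro j
    rw [dotp_neg_left]
    rcases le_total 0 (dotp z (a j)) with h0 | h0
    · rw [abs_of_nonneg h0, max_eq_right h0, max_eq_left (by linarith)]; ring
    · rw [abs_of_nonpos h0, max_eq_left h0, max_eq_right (by linarith)]; ring
  simp only [this, Finset.sum_add_distrib]
  ring

lemma sub_of_tMax {P Q : Set (Fin d → ℝ)} (hP : IsCompact P) (hQ : IsCompact Q)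
    (hQc : Convex ℝ Q) (hQn : Q.Nonempty) (h : ∀ z, tMax P z ≤ tMax Q z) : P ⊆ Q := by
  intro p hp
  by_contra hpQ
  obtain ⟨f, u, hf, hu⟩ := geometric_hahn_banach_closed_point hQc hQ.isClosed hpQ
  obtain ⟨z, hz⟩ := exists_dotp f
  simp only [hz] at hf hu
  have h1 := le_tMax hP z hp
  have h2 : tMax Q z ≤ u := by
    apply csSup_le (hQn.image _)
    rintro _ ⟨q, hq, rfl⟩
    exact (hf q hq).le
  linarith [h z]

lemma symm_tMax {P : Set (Fin d → ℝ)} {c : Fin d → ℝ} (hcomp : IsCompact P) (hne : P.Nonempty)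
    (hc : (fun y => (2 : ℝ) • c - y) '' P = P) (z : Fin d → ℝ) :
    tMax P z = dotp z c + (tMax P z - tMin P z) / 2 := by
  have key : ∀ x ∈ P, (2:ℝ) • c - x ∈ P := fun x hx => by
    have h : (2:ℝ) • c - x ∈ (fun y => (2 : ℝ) • c - y) '' P := ⟨x, hx, rfl⟩
    rwa [hc] at h
  have h1 : tMax P z ≤ 2 * dotp z c - tMin P z := by
    apply csSup_le (hne.image _)
    rintro _ ⟨x, hx, rfl⟩
    have := tMin_le hcomp z (key x hx)
    rw [dotp_sub, dotp_smul] at this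
    linarith
  have h2 : 2 * dotp z c - tMax P z ≤ tMin P z := by
    apply le_csInf (hne.image _)
    rintro _ ⟨x, hx, rfl⟩
    have := le_tMax hcomp z (key x hx)
    rw [dotp_sub, dotp_smul] at this
    linarith
  linarith

lemma zono_edge {n : ℕ} (a : Fin n → Fin d → ℝ) (x : Fin d → ℝ) (hind : PairwiseIndep a)
    {P : Set (Fin d → ℝ)} (hP : P = {x} + ∑ i, segment ℝ 0 (a i))
    {u w y : Fin d → ℝ} (huw : u ≠ w) (hf : segment ℝ u w = face P y) :
    ∃ j, w - u = a j ∨ w - u = - a j := by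
  classical
  set σ : Fin n → ℝ := fun j => if 0 < dotp y (a j) then 1 else 0 with hσ
  set q := x + ∑ j, σ j • a j with hq
  have hmax : tMax P y = dotp y q := by
    rw [hP, zono_tMax, hq, dotp_zono]
    congr 1
    refine Finset.sum_congr rfl fun j _ => ?_
    simp only [hσ]
    split_ifs with h
    · simp [h.le]
    · simp [le_of_not_gt h]
  have hcomp : IsCompact P := hP ▸ zono_compact a x
  have hmemP : ∀ τ : Fin n → ℝ, (∀ j, 0 ≤ τ j ∧ τ j ≤ 1) → x + ∑ j, τ j • a j ∈ P := by
    intro τ h; rw [hP]; exact (mem_zono_s3 a x _).mpr ⟨τ, h, rfl⟩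
  have hσ01 : ∀ j, 0 ≤ σ j ∧ σ j ≤ 1 := fun j => by simp only [hσ]; split_ifs <;> simp
  have hfmem : ∀ p, p ∈ P → dotp y p = dotp y q → p ∈ segment ℝ u w := by
    intro p hp h
    rw [hf]
    exact ⟨hp, fun r hr => by rw [h, ← hmax]; exact le_tMax hcomp y hr⟩
  have hqs : q ∈ segment ℝ u w := hfmem q (hmemP σ hσ01) rfl
  -- q + a j in face
  have hqa : ∀ j, dotp y (a j) = 0 → q + a j ∈ segment ℝ u w := by
    intro j hj
    apply hfmem
    · have hs : q + a j = x + ∑ k, (σ k + if k = j then 1 else 0) • a k := by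
        simp only [add_smul, Finset.sum_add_distrib, ite_smul, one_smul, zero_smul,
          Finset.sum_ite_eq', Finset.mem_univ, if_true]
        rw [hq]; abel
      rw [hs]
      apply hmemP
      intro k
      by_cases hk : k = j
      · subst hk; simp [hσ, hj]
      · simpa [hk] using hσ01 k
    · rw [dotp_add, hj, add_zero]
  have hpar : ∀ j, dotp y (a j) = 0 → ∃ c : ℝ, c ≠ 0 ∧ a j = c • (w - u) := by
    intro j hj
    have h1 := hqs
    have h2 := hqa j hj
    rw [segment_eq_image'] at h1 h2
    obtain ⟨θ, -, h1⟩ := h1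
    obtain ⟨θ', -, h2⟩ := h2
    have h3 : a j = (θ' - θ) • (w - u) := by
      have h4 : a j = (q + a j) - q := by abel
      rw [h4, ← h2]
      nth_rewrite 1 [← h1]
      ext i; simp; ring
    refine ⟨_, ?_, h3⟩
    intro h0
    rw [h0, zero_smul] at h3
    exact hind.1 j h3
  have huniq : ∀ j k, dotp y (a j) = 0 → dotp y (a k) = 0 → j = k := by
    intro j k hj hk
    by_contra hjk
    obtain ⟨c, hc, h1⟩ := hpar j hj
    obtain ⟨c', hc', h2⟩ := hpar k hk
    apply hind.2 j k hjk (c' / c)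
    rw [h1, h2, smul_smul, div_mul_cancel₀ _ hc]
  -- description of the face
  have hdesc : ∀ p ∈ segment ℝ u w, ∃ τ : Fin n → ℝ, (∀ j, 0 ≤ τ j ∧ τ j ≤ 1) ∧
      p = q + ∑ j, (if dotp y (a j) = 0 then τ j else 0) • a j := by
    intro p hp
    rw [hf] at hp
    have hpP : p ∈ P := hp.1
    have hqp : dotp y q ≤ dotp y p := hp.2 q (hmemP σ hσ01)
    rw [hP] at hpP
    obtain ⟨τ, hτ, rfl⟩ := (mem_zono_s3 a x _).mp hpP
    rw [hq, dotp_zono, dotp_zono] at hqp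
    have hle : ∀ j ∈ Finset.univ, τ j * dotp y (a j) ≤ σ j * dotp y (a j) := by
      intro j _
      simp only [hσ]
      split_ifs with h
      · nlinarith [hτ j]
      · nlinarith [hτ j]
    have heq := (Finset.sum_eq_sum_iff_of_le hle).mp
      (le_antisymm (Finset.sum_le_sum hle) (by linarith))
    refine ⟨τ, hτ, ?_⟩
    rw [hq, add_assoc, ← Finset.sum_add_distrib]
    congr 1
    refine Finset.sum_congr rfl fun j hj => ?_
    rw [← add_smul]
    congr 1
    split_ifs with h
    · simp [hσ, h]
    · rw [add_zero]
      exact mul_right_cancel₀ h (heq j hj)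
  by_cases hex : ∃ j, dotp y (a j) = 0
  · obtain ⟨j, hj⟩ := hex
    refine ⟨j, ?_⟩
    have hsq : segment ℝ u w = segment ℝ q (q + a j) := by
      apply Set.Subset.antisymm
      · intro p hp
        obtain ⟨τ, hτ, rfl⟩ := hdesc p hp
        rw [segment_eq_image']
        refine ⟨τ j, ⟨(hτ j).1, (hτ j).2⟩, ?_⟩
        rw [Finset.sum_eq_single j]
        · simp [hj]
        · intro k _ hk
          have : dotp y (a k) ≠ 0 := fun h => hk (huniq k j h hj)
          simp [this]
        · simp
      · exact (convex_segment u w).segment_subset hqs (hqa j hj)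
    rcases seg_eq huw hsq with ⟨rfl, rfl⟩ | ⟨rfl, rfl⟩
    · left; abel
    · right; abel
  · push Not at hex
    exfalso
    apply huw
    have : ∀ p ∈ segment ℝ u w, p = q := by
      intro p hp
      obtain ⟨τ, hτ, h⟩ := hdesc p hp
      rw [h]; simp [hex]
    rw [this u (left_mem_segment ℝ _ _), this w (right_mem_segment ℝ _ _)]

lemma group_dirs {ι : Type} [Fintype ι] (b : ι → Fin d → ℝ) (hb : ∀ i, b i ≠ 0) :
    ∃ (n : ℕ) (ρ : Fin n → Fin d → ℝ) (φ : ι → Fin n) (c : ι → ℝ),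
      PairwiseIndep ρ ∧ (∀ i, c i ≠ 0) ∧ (∀ i, b i = c i • ρ (φ i)) ∧ Function.Surjective φ := by
  classical
  let S : Setoid ι :=
    { r := fun i j => ∃ c : ℝ, c ≠ 0 ∧ b i = c • b j
      iseqv :=
        { refl := fun i => ⟨1, one_ne_zero, by simp⟩
          symm := by
            rintro i j ⟨c, hc, h⟩
            exact ⟨c⁻¹, inv_ne_zero hc, by rw [h, smul_smul, inv_mul_cancel₀ hc, one_smul]⟩
          trans := by
            rintro i j k ⟨c, hc, h⟩ ⟨c', hc', h'⟩
            exact ⟨c * c', mul_ne_zero hc hc', by rw [h, h', smul_smul]⟩ } }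
  let E := Fintype.equivFin (Quotient S)
  have hc : ∀ i, ∃ c : ℝ, c ≠ 0 ∧ b i = c • b ((E.symm (E (Quotient.mk S i))).out) := by
    intro i
    rw [E.symm_apply_apply]
    exact S.symm (Quotient.mk_out (s := S) i)
  choose c hc0 hc using hc
  refine ⟨_, fun k => b ((E.symm k).out), fun i => E (Quotient.mk S i), c, ⟨fun k => hb _, ?_⟩,
    hc0, hc, ?_⟩
  · intro k l hkl r h
    apply hkl
    have hr : r ≠ 0 := by
      rintro rfl
      rw [zero_smul] at h
      exact hb _ h
    have : S.r ((E.symm l).out) ((E.symm k).out) := ⟨r, hr, h⟩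
    have h2 := Quotient.sound (s := S) this
    rw [Quotient.out_eq, Quotient.out_eq] at h2
    exact (E.symm.injective h2).symm
  · intro k
    exact ⟨(E.symm k).out, by simp⟩

lemma edgesParallel_ncard {P : Set (Fin d → ℝ)} {ι : Type} [Fintype ι]
    (e : ι → Set (Fin d → ℝ)) (U W Y : ι → Fin d → ℝ)
    (hinj : Function.Injective e) (hUW : ∀ i, U i ≠ W i) (hseg : ∀ i, e i = segment ℝ (U i) (W i))
    (hY : ∀ i, Y i ≠ 0)
    (hface : ∀ i, e i = face P (Y i)) (hsurj : ∀ e' ∈ edgeSet P, ∃ i, e i = e')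
    (v : Fin d → ℝ) (C : Finset ι) (hC : ∀ i, i ∈ C ↔ ∃ c : ℝ, c ≠ 0 ∧ W i - U i = c • v) :
    (edgesParallel P v).ncard = C.card := by
  have : edgesParallel P v = e '' (C : Set ι) := by
    ext e'
    constructor
    · rintro ⟨u, w, huw, rfl, ⟨y, hy, hf⟩, c, hc, hwu⟩
      obtain ⟨i, hi⟩ := hsurj (segment ℝ u w) ⟨u, w, huw, rfl, y, hy, hf⟩
      refine ⟨i, ?_, hi⟩
      rw [Finset.mem_coe, hC]
      rw [hseg i] at hi
      rcases seg_eq (hUW i) hi with ⟨h1, h2⟩ | ⟨h1, h2⟩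
      · exact ⟨c, hc, by rw [h1, h2, hwu]⟩
      · exact ⟨-c, neg_ne_zero.mpr hc, by rw [h1, h2, neg_smul, ← hwu]; abel⟩
    · rintro ⟨i, hi, rfl⟩
      exact ⟨U i, W i, hUW i, hseg i, ⟨Y i, hY i, hface i⟩, (hC i).mp hi⟩
  rw [this, Set.ncard_image_of_injective _ hinj, Set.ncard_coe_finset]

end helpers

/-- For a centrally symmetric convex polytope `P ⊂ ℝ^d` (`d ≥ 3`) with
nonempty interior, `A(P,z) = λ` for every nonzero `z` iff `P` is a zonotope with a
generator set such that, for every generator `v`, the number of edges of `P` parallel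
to `v` equals `λ`. -/
theorem centSymm_avgVert_const_iff_dim (d : ℕ) (hd : 3 ≤ d) (P : Set (Fin d → ℝ))
    (hP : IsPolytope P) (hint : (interior P).Nonempty) (hsym : CentSymm P) (lam : ℝ) :
    (∀ z : Fin d → ℝ, z ≠ 0 → avgVert P z = lam) ↔
      ∃ (n : ℕ) (a : Fin n → (Fin d → ℝ)) (x : Fin d → ℝ),
        PairwiseIndep a ∧
        P = {x} + ∑ i, segment ℝ 0 (a i) ∧
        ∀ i : Fin n, ((edgesParallel P (a i)).ncard : ℝ) = lam := by
  classical
  obtain ⟨ι, _, e, U, W, Y, hinj, hUW, hseg, hY, hface, hsurj, hne, hformula⟩ :=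
    edge_formula hd hP hint
  have hcomp : IsCompact P := by
    obtain ⟨s, rfl⟩ := hP
    exact Set.Finite.isCompact_convexHull ℝ s.finite_toSet
  have hconv : Convex ℝ P := by
    obtain ⟨s, rfl⟩ := hP
    exact convex_convexHull ℝ _
  have hPne : P.Nonempty := hint.mono interior_subset
  constructor
  · intro hA
    obtain ⟨n, ρ, φ, c, hρ, hc0, hc, hφ⟩ := group_dirs (fun i => W i - U i)
      (fun i => sub_ne_zero.mpr (hUW i).symm)
    have hsum : ∀ z, z ≠ 0 → lam * (tMax P z - tMin P z) = ∑ i, |dotp z (W i - U i)| :=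
      fun z hz => by rw [← hA z hz]; exact hformula z hz
    have hlam : 0 < lam := by
      obtain ⟨i⟩ := hne
      have hb : W i - U i ≠ 0 := sub_ne_zero.mpr (hUW i).symm
      have h1 := hsum _ hb
      have h2 : 0 < ∑ j, |dotp (W i - U i) (W j - U j)| :=
        Finset.sum_pos' (fun j _ => abs_nonneg _)
          ⟨i, Finset.mem_univ _, abs_pos.mpr (dotp_self_pos _ hb).ne'⟩
      rw [← h1] at h2
      exact pos_of_mul_pos_left h2 (width_pos hcomp hint hb).le
    set κ : Fin n → ℝ := fun k => (∑ i with φ i = k, |c i|) / lam with hκ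
    have hκpos : ∀ k, 0 < κ k := by
      intro k
      obtain ⟨i, hi⟩ := hφ k
      refine div_pos (Finset.sum_pos (fun j _ => abs_pos.mpr (hc0 j)) ⟨i, by simp [hi]⟩) hlam
    set a : Fin n → Fin d → ℝ := fun k => κ k • ρ k with ha
    have hind : PairwiseIndep a := by
      refine ⟨fun k => smul_ne_zero (hκpos k).ne' (hρ.1 k), fun k l hkl r h => ?_⟩
      apply hρ.2 k l hkl ((κ l)⁻¹ * (r * κ k))
      simp only [ha] at h
      rw [mul_smul, mul_smul, ← h, smul_smul, inv_mul_cancel₀ (hκpos l).ne', one_smul]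
    have hwid : ∀ z, z ≠ 0 → tMax P z - tMin P z = ∑ k, |dotp z (a k)| := by
      intro z hz
      have h1 : ∑ i, |dotp z (W i - U i)| = lam * ∑ k, |dotp z (a k)| := by
        rw [← Finset.sum_fiberwise Finset.univ φ, Finset.mul_sum]
        refine Finset.sum_congr rfl fun k _ => ?_
        have h2 : ∀ i ∈ Finset.univ.filter (fun i => φ i = k),
            |dotp z (W i - U i)| = |c i| * |dotp z (ρ k)| := by
          intro i hi
          rw [Finset.mem_filter] at hi
          rw [hc i, hi.2, dotp_smul, abs_mul]
        rw [Finset.sum_congr rfl h2, ← Finset.sum_mul]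
        simp only [ha]
        rw [dotp_smul, abs_mul, abs_of_pos (hκpos k)]
        simp only [hκ]
        field_simp
      have h3 := hsum z hz
      rw [h1] at h3
      exact mul_left_cancel₀ hlam.ne' h3
    obtain ⟨c0, hc0'⟩ := hsym
    set x : Fin d → ℝ := c0 - (1/2 : ℝ) • ∑ k, a k with hx
    have htm : ∀ z, tMax P z = tMax ({x} + ∑ i, segment ℝ 0 (a i)) z := by
      intro z
      by_cases hz : z = 0
      · have h0 : ∀ Q : Set (Fin d → ℝ), Q.Nonempty → tMax Q 0 = 0 := by
          intro Q hQ
          have : dotp (0 : Fin d → ℝ) '' Q = {0} := by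
            have : dotp (0 : Fin d → ℝ) = fun _ => 0 := by ext p; exact dotp_zero_left p
            rw [this, hQ.image_const]
          rw [tMax, this, csSup_singleton]
        rw [hz, h0 P hPne, h0 _ ⟨x, (mem_zono_s3 a x x).mpr ⟨0, by simp, by simp⟩⟩]
      · rw [symm_tMax hcomp hPne hc0', hwid z hz, zono_tMax, hx, dotp_sub, dotp_smul, dotp_sum]
        have : ∀ k, max 0 (dotp z (a k)) = (dotp z (a k) + |dotp z (a k)|) / 2 := by
          intro k
          rcases le_total 0 (dotp z (a k)) with h0 | h0
          · rw [abs_of_nonneg h0, max_eq_right h0]; ring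
          · rw [abs_of_nonpos h0, max_eq_left h0]; ring
        simp only [this]
        rw [← Finset.sum_div, Finset.sum_add_distrib]
        ring
    have hPZ : P = {x} + ∑ i, segment ℝ 0 (a i) := by
      apply Set.Subset.antisymm
      · exact sub_of_tMax hcomp (zono_compact a x) (zono_convex a x)
          ⟨x, (mem_zono_s3 a x x).mpr ⟨0, by simp, by simp⟩⟩ (fun z => (htm z).le)
      · exact sub_of_tMax (zono_compact a x) hcomp hconv hPne (fun z => (htm z).ge)
    refine ⟨n, a, x, hind, hPZ, fun k => ?_⟩
    have hφiff : ∀ i k (r : ℝ), W i - U i = r • a k → φ i = k := by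
      intro i k r h
      by_contra hne
      rw [hc i] at h
      apply hρ.2 k (φ i) (fun h => hne h.symm) ((c i)⁻¹ * (r * κ k))
      rw [mul_smul, mul_smul]
      simp only [ha] at h
      rw [← h, smul_smul, inv_mul_cancel₀ (hc0 i), one_smul]
    have hcabs : ∀ i, |c i| = κ (φ i) := by
      intro i
      obtain ⟨j, hj⟩ := zono_edge a x hind hPZ (hUW i) ((hseg i).symm.trans (hface i))
      have hj' : ∃ r : ℝ, |r| = 1 ∧ W i - U i = r • a j := by
        rcases hj with h | h
        · exact ⟨1, by simp, by simp [h]⟩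
        · exact ⟨-1, by simp, by simp [h]⟩
      obtain ⟨r, hr, h⟩ := hj'
      have hij := hφiff i j r h
      rw [hc i, ← hij] at h
      simp only [ha] at h
      rw [smul_smul] at h
      have h2 := smul_left_injective ℝ (hρ.1 (φ i)) h
      rw [h2, abs_mul, hr, one_mul, abs_of_pos (hκpos _)]
    rw [edgesParallel_ncard e U W Y hinj hUW hseg hY hface hsurj (a k)
      (Finset.univ.filter fun i => φ i = k)]
    · have h1 : κ k * lam = ∑ i with φ i = k, |c i| := by
        simp only [hκ]; field_simp
      have h2 : ∑ i with φ i = k, |c i| = ∑ i with φ i = k, κ k := by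
        refine Finset.sum_congr rfl fun i hi => ?_
        rw [Finset.mem_filter] at hi
        rw [hcabs i, hi.2]
      rw [h2, Finset.sum_const, nsmul_eq_mul, mul_comm] at h1
      exact (mul_right_cancel₀ (hκpos k).ne' h1).symm
    · intro i
      rw [Finset.mem_filter]
      constructor
      · rintro ⟨-, rfl⟩
        refine ⟨c i / κ (φ i), div_ne_zero (hc0 i) (hκpos _).ne', ?_⟩
        simp only [ha]
        rw [smul_smul, div_mul_cancel₀ _ (hκpos _).ne']
        exact hc i
      · rintro ⟨r, -, h⟩
        exact ⟨Finset.mem_univ _, hφiff i k r h⟩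
  · rintro ⟨n, a, x, hind, hPZ, hN⟩ z hz
    have hedge : ∀ i, ∃ j, W i - U i = a j ∨ W i - U i = - a j := fun i =>
      zono_edge a x hind hPZ (hUW i) ((hseg i).symm.trans (hface i))
    choose φ hφ using hedge
    have hw := width_pos hcomp hint hz
    have hwid : tMax P z - tMin P z = ∑ k, |dotp z (a k)| := by
      conv_lhs => rw [hPZ]
      exact zono_width a x z
    have hcount : ∀ k, ((Finset.univ.filter fun i => φ i = k).card : ℝ) = lam := by
      intro k
      rw [← hN k, edgesParallel_ncard e U W Y hinj hUW hseg hY hface hsurj (a k)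
        (Finset.univ.filter fun i => φ i = k)]
      intro i
      rw [Finset.mem_filter]
      constructor
      · rintro ⟨-, rfl⟩
        rcases hφ i with h | h
        · exact ⟨1, one_ne_zero, by simp [h]⟩
        · exact ⟨-1, by norm_num, by simp [h]⟩
      · rintro ⟨r, -, h⟩
        refine ⟨Finset.mem_univ _, ?_⟩
        by_contra hne
        rcases hφ i with h' | h'
        · exact hind.2 k (φ i) (fun h => hne h.symm) r (by rw [← h', h])
        · exact hind.2 k (φ i) (fun h => hne h.symm) (-r) (by rw [neg_smul, ← h, h', neg_neg])
    have hf := hformula z hz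
    have h1 : ∑ i, |dotp z (W i - U i)| = lam * ∑ k, |dotp z (a k)| := by
      rw [← Finset.sum_fiberwise Finset.univ φ, Finset.mul_sum]
      refine Finset.sum_congr rfl fun k _ => ?_
      have h2 : ∀ i ∈ Finset.univ.filter (fun i => φ i = k),
          |dotp z (W i - U i)| = |dotp z (a k)| := by
        intro i hi
        rw [Finset.mem_filter] at hi
        rcases hφ i with h | h
        · rw [h, hi.2]
        · rw [h, hi.2, dotp_neg, abs_neg]
      rw [Finset.sum_congr rfl h2, Finset.sum_const, nsmul_eq_mul, hcount k]
    rw [h1, ← hwid] at hf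
    exact mul_right_cancel₀ hw.ne' hf
end
end

section
/- Let P ⊂ ℝ^d be a convex polytope with nonempty interior. If there is a constant λ such that A(P,z) = λ for every nonzero z ∈ ℝ^d, then the difference body P − P = {x − y : x, y ∈ P} is a zonotope. -/
open scoped Pointwise BigOperators

noncomputable section

section geo

variable {E : Type*} [AddCommGroup E] [Module ℝ E]

def Dir (P : Set E) (x a : E) : Prop := ∃ ε : ℝ, 0 < ε ∧ x + ε • a ∈ P ∧ x - ε • a ∈ P

lemma Dir.add {P : Set E} (hP : Convex ℝ P) {x a b : E} (ha : Dir P x a) (hb : Dir P x b) :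
    Dir P x (a + b) := by
  obtain ⟨e, he, h1, h2⟩ := ha
  obtain ⟨f, hf, h3, h4⟩ := hb
  have hs : 0 < e + f := by positivity
  refine ⟨e * f / (e + f), by positivity, ?_, ?_⟩
  · have := hP h1 h3 (a := f / (e + f)) (b := e / (e + f)) (by positivity) (by positivity)
      (by field_simp; ring)
    convert this using 1
    match_scalars <;> field_simp <;> ring
  · have := hP h2 h4 (a := f / (e + f)) (b := e / (e + f)) (by positivity) (by positivity)
      (by field_simp; ring)
    convert this using 1
    match_scalars <;> field_simp <;> ring

lemma Dir.smul {P : Set E} {x a : E} (hx : x ∈ P) (ha : Dir P x a) (c : ℝ) :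
    Dir P x (c • a) := by
  obtain ⟨e, he, h1, h2⟩ := ha
  rcases lt_trichotomy c 0 with hc | hc | hc
  · refine ⟨e / (-c), div_pos he (by linarith), ?_, ?_⟩
    · convert h2 using 1
      have : c ≠ 0 := hc.ne
      match_scalars <;> field_simp
    · convert h1 using 1
      have : c ≠ 0 := hc.ne
      match_scalars <;> field_simp
  · subst hc
    exact ⟨1, one_pos, by simpa, by simpa⟩
  · refine ⟨e / c, by positivity, ?_, ?_⟩
    · convert h1 using 1
      match_scalars <;> field_simp
    · convert h2 using 1
      match_scalars <;> field_simp

lemma Dir.of_openSegment {P : Set E} (hP : Convex ℝ P) {x p q : E} (hp : p ∈ P) (hq : q ∈ P)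
    (hx : x ∈ openSegment ℝ p q) : Dir P x (q - p) := by
  obtain ⟨a, b, ha, hb, hab, rfl⟩ := hx
  refine ⟨a * b, by positivity, ?_, ?_⟩
  · have := hP hp hq (a := a * a) (b := b + a * b) (by positivity) (by positivity)
      (by obtain rfl : b = 1 - a := by linarith
          ring)
    convert this using 1
    obtain rfl : b = 1 - a := by linarith
    module
  · have := hP hp hq (a := a + a * b) (b := b * b) (by positivity) (by positivity)
      (by obtain rfl : b = 1 - a := by linarith
          ring)
    convert this using 1
    obtain rfl : b = 1 - a := by linarith
    module

lemma Dir.move {P : Set E} (hP : Convex ℝ P) {y r v : E} (hy : Dir P y v) (hr : r ∈ P)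
    {a b : ℝ} (ha : 0 < a) (hb : 0 ≤ b) (hab : a + b = 1) : Dir P (a • y + b • r) v := by
  obtain ⟨e, he, h1, h2⟩ := hy
  refine ⟨a * e, by positivity, ?_, ?_⟩
  · convert hP h1 hr ha.le hb hab using 1
    module
  · convert hP h2 hr ha.le hb hab using 1
    module

lemma Dir.parallel {P : Set E} (hP : Convex ℝ P) (l : E →ₗ[ℝ] ℝ) {t : ℝ} {x a b : E}
    (hx : x ∈ Set.extremePoints ℝ (P ∩ {x | l x = t})) (ha : Dir P x a) (hb : Dir P x b)
    (hla : l a ≠ 0) : b = (l b / l a) • a := by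
  have hxP : x ∈ P := hx.1.1
  have hxt : l x = t := hx.1.2
  obtain ⟨e, he, h1, h2⟩ := hb.add hP (ha.smul hxP (-(l b / l a)))
  set v := b + (-(l b / l a)) • a with hv
  have hlv : l v = 0 := by
    rw [hv, map_add, map_smul, smul_eq_mul]; field_simp; ring
  have := hx.2 (x₁ := x + e • v) ⟨h1, by simp [hlv, hxt]⟩ (x₂ := x - e • v)
    ⟨h2, by simp [hlv, hxt]⟩ ⟨1/2, 1/2, by norm_num, by norm_num, by norm_num, by module⟩
  have h0 : e • v = 0 := by simpa using this
  have hv0 : v = 0 := (smul_eq_zero.1 h0).resolve_left he.ne'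
  rw [hv, neg_smul, add_neg_eq_zero] at hv0
  exact hv0

lemma hull_shift (V : Finset E) (c : E → ℝ) (hc : ∀ v ∈ V, 0 ≤ c v)
    (h1 : ∑ v ∈ V, c v = 1) {u w : E} (hu : u ∈ V) (hw : w ∈ V) {e : ℝ} (he : 0 ≤ e)
    (hew : e ≤ c w) : (∑ v ∈ V, c v • v) + e • (u - w) ∈ convexHull ℝ (V : Set E) := by
  classical
  rw [Finset.mem_convexHull']
  refine ⟨fun i => c i + e * ((if i = u then 1 else 0) - (if i = w then 1 else 0)), ?_, ?_, ?_⟩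
  · intro y hy
    have := hc y hy
    by_cases h : y = w
    · subst h; simp only [if_true]; split_ifs <;> linarith
    · simp only [if_neg h]; split_ifs <;> linarith
  · simp [Finset.sum_add_distrib, ← Finset.mul_sum, Finset.sum_sub_distrib, h1, hu, hw]
  · simp only [add_smul, mul_smul, sub_smul, Finset.sum_add_distrib, ← Finset.smul_sum,
      Finset.sum_sub_distrib, ite_smul, one_smul, zero_smul, Finset.sum_ite_eq', hu, hw, if_true]

lemma exists_cross (V : Finset E) (l : E →ₗ[ℝ] ℝ) {t : ℝ} {x : E}
    (hx : x ∈ Set.extremePoints ℝ (convexHull ℝ (V : Set E) ∩ {x | l x = t}))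
    (ht : ∀ v ∈ V, l v ≠ t) :
    ∃ u ∈ V, ∃ w ∈ V, l u < t ∧ t < l w ∧ x ∈ openSegment ℝ u w := by
  obtain ⟨c, hc, h1, hcx⟩ := Finset.mem_convexHull'.1 hx.1.1
  have hxt : l x = t := hx.1.2
  have hsum : ∑ v ∈ V, c v * (l v - t) = 0 := by
    simp only [mul_sub, Finset.sum_sub_distrib, ← Finset.sum_mul, h1, one_mul]
    rw [← hxt, ← hcx]; simp [map_sum]
  have hex : ∃ v ∈ V, c v ≠ 0 := by
    by_contra! h
    rw [Finset.sum_eq_zero h] at h1; norm_num at h1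
  obtain ⟨v0, hv0, hcv0⟩ := hex
  have hne : c v0 * (l v0 - t) ≠ 0 := mul_ne_zero hcv0 (sub_ne_zero.2 (ht v0 hv0))
  have hpos : ∃ w ∈ V, 0 < c w * (l w - t) := by
    by_contra! h
    exact hne ((Finset.sum_eq_zero_iff_of_nonpos h).1 hsum v0 hv0)
  have hneg : ∃ u ∈ V, c u * (l u - t) < 0 := by
    by_contra! h
    exact hne ((Finset.sum_eq_zero_iff_of_nonneg h).1 hsum v0 hv0)
  obtain ⟨w, hw, hw'⟩ := hpos
  obtain ⟨u, hu, hu'⟩ := hneg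
  have hcw : 0 < c w := lt_of_le_of_ne (hc w hw) (by rintro h; simp [← h] at hw')
  have hcu : 0 < c u := lt_of_le_of_ne (hc u hu) (by rintro h; simp [← h] at hu')
  have hlw : t < l w := by have := pos_of_mul_pos_right hw' hcw.le; linarith
  have hlu : l u < t := by by_contra! h; nlinarith
  have hD : ∀ v ∈ V, 0 < c v → Dir (convexHull ℝ (V : Set E)) x (v - u) := by
    intro v hv hcv
    refine ⟨min (c v) (c u), lt_min hcv hcu, ?_, ?_⟩
    · rw [← hcx]
      exact hull_shift V c hc h1 hv hu (le_min hcv.le hcu.le) (min_le_right _ _)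
    · have := hull_shift V c hc h1 hu hv (le_min hcv.le hcu.le) (min_le_left _ _)
      rw [hcx] at this
      convert this using 1
      module
  have hlne : l (w - u) ≠ 0 := by rw [map_sub]; linarith
  have hpar : ∀ v ∈ V, c v • (v - u) = (c v * (l (v - u) / l (w - u))) • (w - u) := by
    intro v hv
    rcases (hc v hv).eq_or_lt with h | h
    · simp [← h]
    · rw [mul_smul, ← Dir.parallel (convex_convexHull ℝ _) l hx (hD w hw hcw) (hD v hv h) hlne]
  obtain ⟨r, hr⟩ : ∃ r : ℝ, x = u + r • (w - u) := by
    refine ⟨∑ v ∈ V, c v * (l (v - u) / l (w - u)), ?_⟩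
    rw [Finset.sum_smul, ← Finset.sum_congr rfl hpar]
    simp only [smul_sub, Finset.sum_sub_distrib, ← Finset.sum_smul, h1, hcx]
    simp
  have hr2 : t = l u + r * (l w - l u) := by rw [← hxt, hr]; simp
  refine ⟨u, hu, w, hw, hlu, hlw, 1 - r, r, ?_, ?_, by ring, by rw [hr]; module⟩
  · by_contra! h; nlinarith
  · by_contra! h; nlinarith

lemma edge_extreme {P : Set E} (hP : Convex ℝ P) (l : E →ₗ[ℝ] ℝ) {t : ℝ} {x u w : E}
    (hx : x ∈ Set.extremePoints ℝ (P ∩ {x | l x = t}))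
    (hu : u ∈ Set.extremePoints ℝ P) (hw : w ∈ Set.extremePoints ℝ P)
    (hlu : l u < t) (hlw : t < l w) (hxs : x ∈ openSegment ℝ u w) :
    IsExtreme ℝ P (segment ℝ u w) := by
  have huw : u ≠ w := by rintro rfl; linarith
  have hlne : l (w - u) ≠ 0 := by rw [map_sub]; linarith
  refine ⟨hP.segment_subset hu.1 hw.1, ?_⟩
  intro p hp q hq y hy hypq
  by_cases hyu : y = u
  · subst hyu
    rw [hu.2 hp hq hypq]; exact left_mem_segment _ _ _
  by_cases hyw : y = w
  · subst hyw
    rw [hw.2 hp hq hypq]; exact right_mem_segment _ _ _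
  have hDx := Dir.of_openSegment hP hu.1 hw.1 hxs
  have hDy := Dir.of_openSegment hP hp hq hypq
  have hyo : y ∈ openSegment ℝ u w := by
    have := mem_openSegment_of_ne_left_right (Ne.symm hyu) (Ne.symm hyw) hy
    exact this
  obtain ⟨s', s, hs', hs, hss, rfl⟩ := hyo
  obtain ⟨τ', τ, hτ', hτ, hττ, rfl⟩ := hxs
  obtain rfl : s' = 1 - s := by linarith
  obtain rfl : τ' = 1 - τ := by linarith
  have hD : Dir P ((1 - τ) • u + τ • w) (q - p) := by
    rcases le_or_gt τ s with h | h
    · have := hDy.move hP hu.1 (a := τ / s) (b := 1 - τ / s) (by positivity)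
        (by rw [sub_nonneg, div_le_one hs]; exact h) (by ring)
      convert this using 1
      match_scalars <;> field_simp <;> ring
    · have := hDy.move hP hw.1 (a := (1 - τ) / (1 - s)) (b := 1 - (1 - τ) / (1 - s))
        (by positivity) (by rw [sub_nonneg, div_le_one hs']; linarith) (by ring)
      convert this using 1
      match_scalars <;> field_simp <;> ring
  have hk := Dir.parallel hP l hx hDx hD hlne
  set k := l (q - p) / l (w - u)
  obtain ⟨a, b, ha, hb, hab, he⟩ := hypq
  have hpr : p = u + (s - b * k) • (w - u) := by
    have e1 : p = (a • p + b • q) - b • (q - p) := by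
      obtain rfl : a = 1 - b := by linarith
      module
    rw [e1, he, hk]; module
  set r := s - b * k
  have hr0 : 0 ≤ r := by
    by_contra! h
    have h1 : 0 < 1 - r := by linarith
    have h2 : 0 < -r := by linarith
    refine huw (hu.2 hw.1 hp ⟨-r / (1 - r), 1 / (1 - r), by positivity, by positivity,
      by field_simp; ring, ?_⟩).symm
    rw [hpr]
    match_scalars <;> field_simp <;> ring
  have hr1 : r ≤ 1 := by
    by_contra! h
    have h0 : 0 < r := by linarith
    have h2 : 0 < r - 1 := by linarith
    refine huw (hw.2 hu.1 hp ⟨(r - 1) / r, 1 / r, by positivity, by positivity,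
      by field_simp; ring, ?_⟩)
    rw [hpr]
    match_scalars <;> field_simp <;> ring
  exact ⟨1 - r, r, by linarith, hr0, by ring, by rw [hpr]; module⟩

lemma edge_cross {P : Set E} (l : E →ₗ[ℝ] ℝ) {t : ℝ} {x u w : E}
    (hE : IsExtreme ℝ P (segment ℝ u w)) (hlu : l u < t) (hlw : t < l w)
    (hxs : x ∈ openSegment ℝ u w) (hxt : l x = t) :
    x ∈ Set.extremePoints ℝ (P ∩ {x | l x = t}) := by
  have hxs' := openSegment_subset_segment ℝ u w hxs
  refine ⟨⟨hE.1 hxs', hxt⟩, ?_⟩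
  rintro p ⟨hp, hpt⟩ q ⟨hq, hqt⟩ hxpq
  have hps := hE.2 hp hq hxs' hxpq
  obtain ⟨a, b, ha, hb, hab, rfl⟩ := hps
  obtain ⟨c, e, hc, he, hce, rfl⟩ := hxs'
  simp only [Set.mem_setOf_eq, map_add, map_smul, smul_eq_mul] at hpt hxt
  obtain rfl : a = 1 - b := by linarith
  obtain rfl : c = 1 - e := by linarith
  have : (b - e) * (l w - l u) = 0 := by linarith
  have : b - e = 0 := (mul_eq_zero.1 this).resolve_right (by linarith)
  obtain rfl : b = e := by linarith
  rfl

lemma extreme_in_seg {P : Set E} {u a b : E} (hu : u ∈ Set.extremePoints ℝ P) (ha : a ∈ P)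
    (hb : b ∈ P) (h : u ∈ segment ℝ a b) : u = a ∨ u = b := by
  by_contra! hh
  have := mem_openSegment_of_ne_left_right hh.1.symm hh.2.symm h
  exact hh.1 (hu.2 ha hb this).symm

open Classical in
def edgePairs (P : Set E) (V : Finset E) : Finset (E × E) :=
  (V ×ˢ V).filter (fun p => IsExtreme ℝ P (segment ℝ p.1 p.2))

lemma count_s4 (P : Set E) (V : Finset E) (hV : (V : Set E) = Set.extremePoints ℝ P)
    (hPV : P = convexHull ℝ (V : Set E)) (l : E →ₗ[ℝ] ℝ) {t : ℝ} (ht : ∀ v ∈ V, l v ≠ t) :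
    (Set.extremePoints ℝ (P ∩ {x | l x = t})).ncard =
      ((edgePairs P V).filter (fun p => l p.1 < t ∧ t < l p.2)).card ∧
    (Set.extremePoints ℝ (P ∩ {x | l x = t})).Finite := by
  have hconv : Convex ℝ P := by rw [hPV]; exact convex_convexHull _ _
  have hVe : ∀ v ∈ V, v ∈ Set.extremePoints ℝ P := fun v hv => by rw [← hV]; exact hv
  set F := (edgePairs P V).filter (fun p => l p.1 < t ∧ t < l p.2) with hF
  let φ : E × E → E := fun p => p.1 + ((t - l p.1) / (l p.2 - l p.1)) • (p.2 - p.1)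
  have hmem : ∀ p, p ∈ F ↔ (p.1 ∈ V ∧ p.2 ∈ V) ∧ IsExtreme ℝ P (segment ℝ p.1 p.2) ∧
      l p.1 < t ∧ t < l p.2 := by
    intro p; simp [hF, edgePairs, and_assoc]
  have hφo : ∀ p ∈ F, φ p ∈ openSegment ℝ p.1 p.2 ∧ l (φ p) = t := by
    intro p hp
    obtain ⟨-, -, h1, h2⟩ := (hmem p).1 hp
    have h3 : 0 < l p.2 - l p.1 := by linarith
    have h4 : 0 < t - l p.1 := by linarith
    have h5 : 0 < l p.2 - t := by linarith
    refine ⟨⟨(l p.2 - t) / (l p.2 - l p.1), (t - l p.1) / (l p.2 - l p.1), by positivity,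
      by positivity, by field_simp; ring, ?_⟩, ?_⟩
    · simp only [φ]
      match_scalars <;> field_simp <;> ring
    · simp only [φ, map_add, map_smul, map_sub, smul_eq_mul]
      field_simp; ring
  have himg : Set.extremePoints ℝ (P ∩ {x | l x = t}) = φ '' (F : Set (E × E)) := by
    ext x
    constructor
    · intro hx
      obtain ⟨u, hu, w, hw, hlu, hlw, hxs⟩ := exists_cross V l (hPV ▸ hx) ht
      have hpF : (u, w) ∈ F := (hmem _).2 ⟨⟨hu, hw⟩,
        edge_extreme hconv l hx (hVe u hu) (hVe w hw) hlu hlw hxs, hlu, hlw⟩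
      refine ⟨(u, w), hpF, ?_⟩
      have hxt : l x = t := hx.1.2
      obtain ⟨a, b, ha, hb, hab, rfl⟩ := hxs
      obtain rfl : a = 1 - b := by linarith
      have : (t - l u) / (l w - l u) = b := by
        rw [← hxt]
        have : l w - l u ≠ 0 := by linarith
        simp only [map_add, map_smul, smul_eq_mul]
        field_simp; ring
      simp only [φ, this]
      module
    · rintro ⟨p, hp, rfl⟩
      obtain ⟨-, h0, h1, h2⟩ := (hmem p).1 hp
      exact edge_cross l h0 h1 h2 (hφo p hp).1 (hφo p hp).2
  have hinj : Set.InjOn φ (F : Set (E × E)) := by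
    rintro ⟨u, w⟩ hp ⟨u', w'⟩ hp' he
    obtain ⟨⟨hu, hw⟩, hE, h1, h2⟩ := (hmem _).1 hp
    obtain ⟨⟨hu', hw'⟩, hE', h1', h2'⟩ := (hmem _).1 hp'
    have ho := (hφo _ hp).1
    have ho' := openSegment_subset_segment _ _ _ (hφo _ hp').1
    rw [← he] at ho'
    dsimp only at *
    have hus := hE'.2 (hVe u hu).1 (hVe w hw).1 ho' ho
    have hws := hE'.right_mem_of_mem_openSegment (hVe u hu).1 (hVe w hw).1 ho' ho
    have e1 : u = u' := by
      rcases extreme_in_seg (hVe u hu) (hVe u' hu').1 (hVe w' hw').1 hus with h | h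
      · exact h
      · subst h; linarith
    have e2 : w = w' := by
      rcases extreme_in_seg (hVe w hw) (hVe u' hu').1 (hVe w' hw').1 hws with h | h
      · subst h; linarith
      · exact h
    rw [e1, e2]
  rw [himg, Set.ncard_image_of_injOn hinj, Set.ncard_coe_finset]
  exact ⟨rfl, F.finite_toSet.image _⟩

end geo

open MeasureTheory in
lemma integral_count {d : ℕ} (P : Set (Fin d → ℝ)) (V : Finset (Fin d → ℝ))
    (hV : (V : Set (Fin d → ℝ)) = Set.extremePoints ℝ P)
    (hPV : P = convexHull ℝ (V : Set (Fin d → ℝ))) (l : (Fin d → ℝ) →ₗ[ℝ] ℝ) {a b : ℝ}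
    (hab : a ≤ b) (hVab : ∀ v ∈ V, a ≤ l v ∧ l v ≤ b) :
    ∫ t in a..b, (nVert (P ∩ {x | l x = t}) : ℝ) =
      ∑ p ∈ edgePairs P V, max (l p.2 - l p.1) 0 := by
  have hfin : (⇑l '' (V : Set (Fin d → ℝ))).Finite := V.finite_toSet.image _
  have hae : ∀ᵐ t : ℝ, t ∉ ⇑l '' (V : Set (Fin d → ℝ)) :=
    measure_eq_zero_iff_ae_notMem.1 (hfin.measure_zero _)
  have h1 : ∫ t in a..b, (nVert (P ∩ {x | l x = t}) : ℝ) =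
      ∫ t in a..b, ∑ p ∈ edgePairs P V, (Set.Ioo (l p.1) (l p.2)).indicator (fun _ => (1 : ℝ)) t := by
    apply intervalIntegral.integral_congr_ae
    filter_upwards [hae] with t ht _
    rw [nVert, (count_s4 P V hV hPV l (t := t) (fun v hv h => ht ⟨v, hv, h⟩)).1]
    rw [Finset.card_filter]
    push_cast
    apply Finset.sum_congr rfl
    intro p _
    simp [Set.indicator_apply, Set.mem_Ioo]
  have hI : ∀ u v : ℝ, IntegrableOn ((Set.Ioo u v).indicator (fun _ => (1 : ℝ))) (Set.Ioc a b) := by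
    intro u v
    apply IntegrableOn.indicator
    · exact integrableOn_const (by simp)
    · exact measurableSet_Ioo
  rw [h1, intervalIntegral.integral_of_le hab, integral_finsetSum _ (fun p _ => hI _ _)]
  apply Finset.sum_congr rfl
  intro p hp
  have hp' : p.1 ∈ V ∧ p.2 ∈ V := by
    simp only [edgePairs, Finset.mem_filter, Finset.mem_product] at hp
    exact hp.1
  rw [setIntegral_indicator measurableSet_Ioo]
  have hsub : Set.Ioc a b ∩ Set.Ioo (l p.1) (l p.2) = Set.Ioo (l p.1) (l p.2) := by
    apply Set.inter_eq_right.2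
    intro x hx
    exact ⟨(hVab _ hp'.1).1.trans_lt hx.1, hx.2.le.trans (hVab _ hp'.2).2⟩
  rw [hsub]
  simp [Measure.real, ENNReal.toReal_ofReal']

lemma merge {d : ℕ} (f : (Fin d → ℝ) → ℝ)
    (h : ∃ n, ∃ a : Fin n → (Fin d → ℝ), ∀ z, f z = ∑ i, |z ⬝ᵥ a i|) :
    ∃ n, ∃ a : Fin n → (Fin d → ℝ), PairwiseIndep a ∧ ∀ z, f z = ∑ i, |z ⬝ᵥ a i| := by
  classical
  obtain ⟨a, ha⟩ := Nat.find_spec h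
  have hmin := fun m (hm : m < Nat.find h) => Nat.find_min h hm
  generalize Nat.find h = n at *
  refine ⟨n, a, ⟨?_, ?_⟩, ha⟩
  · intro j hj
    cases n with
    | zero => exact j.elim0
    | succ n =>
      refine hmin n (by omega) ⟨fun k => a (j.succAbove k), fun z => ?_⟩
      rw [ha z, Fin.sum_univ_succAbove _ j]
      simp [hj]
  · intro i j hij c hc
    cases n with
    | zero => exact j.elim0
    | succ n =>
      obtain ⟨i, rfl⟩ := Fin.exists_succAbove_eq hij
      refine hmin n (by omega)
        ⟨fun k => (if k = i then 1 + |c| else 1) • a (j.succAbove k), fun z => ?_⟩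
      rw [ha z, Fin.sum_univ_succAbove _ j]
      have : ∀ k, |z ⬝ᵥ ((if k = i then 1 + |c| else 1) • a (j.succAbove k))| =
          |z ⬝ᵥ a (j.succAbove k)| + if k = i then |c| * |z ⬝ᵥ a (j.succAbove k)| else 0 := by
        intro k
        split_ifs
        · rw [dotProduct_smul, smul_eq_mul, abs_mul, abs_of_nonneg (by positivity)]; ring
        · simp
      simp only [this, Finset.sum_add_distrib]
      rw [hc, dotProduct_smul, smul_eq_mul, abs_mul]
      simp [add_comm]

lemma subset_of_support {d : ℕ} {K L : Set (Fin d → ℝ)} (hL : Convex ℝ L) (hLc : IsClosed L)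
    (h : ∀ z : Fin d → ℝ, ∀ x ∈ K, ∃ y ∈ L, z ⬝ᵥ x ≤ z ⬝ᵥ y) : K ⊆ L := by
  intro x hx
  by_contra hxL
  obtain ⟨f, u, h1, h2⟩ := geometric_hahn_banach_closed_point hL hLc hxL
  have hf : ∀ y, f y = (fun i => f (Pi.single i 1)) ⬝ᵥ y := by
    intro y
    have := LinearMap.pi_apply_eq_sum_univ (f : (Fin d → ℝ) →ₗ[ℝ] ℝ) y
    simp only [ContinuousLinearMap.coe_coe] at this
    rw [this, dotProduct]
    apply Finset.sum_congr rfl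
    intro i _
    rw [smul_eq_mul, mul_comm]
    congr 2
    ext j
    simp [Pi.single_apply, eq_comm]
  obtain ⟨y, hy, hxy⟩ := h _ x hx
  rw [← hf, ← hf] at hxy
  linarith [h1 y hy]

lemma compact_sum {d n : ℕ} (a : Fin n → (Fin d → ℝ)) :
    IsCompact (∑ i, segment ℝ 0 (a i)) := by
  classical
  induction (Finset.univ : Finset (Fin n)) using Finset.induction_on with
  | empty => simpa using isCompact_singleton
  | insert i s hi ih =>
    rw [Finset.sum_insert hi]
    refine IsCompact.add ?_ ih
    rw [← convexHull_pair]
    exact (Set.toFinite _).isCompact_convexHull ℝ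

lemma dotp_eq {d : ℕ} (z x : Fin d → ℝ) : dotp z x = z ⬝ᵥ x := rfl

def dl {d : ℕ} (z : Fin d → ℝ) : (Fin d → ℝ) →ₗ[ℝ] ℝ where
  toFun x := z ⬝ᵥ x
  map_add' := by intros; simp [dotProduct_add]
  map_smul' := by intros; simp [dotProduct_smul]

lemma zono_of_support {d : ℕ} (P : Set (Fin d → ℝ)) (hc : IsCompact P) (hconv : Convex ℝ P)
    (hne : P.Nonempty) {n : ℕ} (a : Fin n → (Fin d → ℝ))
    (h : ∀ z, tMax P z - tMin P z = (1 / 2) * ∑ i, |z ⬝ᵥ a i|) :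
    P - P = {-((1 / 2 : ℝ) • ∑ i, a i)} + ∑ i, segment ℝ 0 (a i) := by
  have hcont : ∀ z : Fin d → ℝ, Continuous (dotp z) := by
    intro z; unfold dotp; fun_prop
  have hcomp : ∀ z : Fin d → ℝ, IsCompact (dotp z '' P) := fun z => hc.image (hcont z)
  have habs : ∀ r : ℝ, |r| = 2 * max r 0 - r := by
    intro r
    rcases le_total r 0 with h | h
    · rw [abs_of_nonpos h, max_eq_right h]; ring
    · rw [abs_of_nonneg h, max_eq_left h]; ring
  have hh : ∀ z : Fin d → ℝ, tMax P z - tMin P z =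
      ∑ i, max (z ⬝ᵥ a i) 0 - (1 / 2) * ∑ i, z ⬝ᵥ a i := by
    intro z
    rw [h z]
    simp only [habs, Finset.sum_sub_distrib, ← Finset.mul_sum]
    ring
  have hz : ∀ (z : Fin d → ℝ) (y : Fin d → ℝ), z ⬝ᵥ (-((1 / 2 : ℝ) • ∑ i, a i) + y) =
      z ⬝ᵥ y - (1 / 2) * ∑ i, z ⬝ᵥ a i := by
    intro z y
    rw [dotProduct_add, dotProduct_neg, dotProduct_smul, dotProduct_sum, smul_eq_mul]; ring
  apply Set.Subset.antisymm
  · apply subset_of_support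
    · exact (convex_singleton _).add (convex_sum _ (fun i _ => convex_segment _ _))
    · exact (isCompact_singleton.add (compact_sum a)).isClosed
    · rintro z _ ⟨p, hp, q, hq, rfl⟩
      refine ⟨-((1 / 2 : ℝ) • ∑ i, a i) + ∑ i, (if 0 ≤ z ⬝ᵥ a i then a i else 0),
        Set.add_mem_add rfl ?_, ?_⟩
      · apply Set.finset_sum_mem_finset_sum
        intro i _
        split_ifs
        · exact right_mem_segment _ _ _
        · exact left_mem_segment _ _ _
      · have e : z ⬝ᵥ ∑ i, (if 0 ≤ z ⬝ᵥ a i then a i else 0) = ∑ i, max (z ⬝ᵥ a i) 0 := by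
          rw [dotProduct_sum]
          apply Finset.sum_congr rfl
          intro i _
          split_ifs with h
          · rw [max_eq_left h]
          · rw [max_eq_right (by linarith)]; simp
        rw [hz, e, ← hh]
        have h1 : dotp z p ≤ tMax P z := le_csSup (hcomp z).bddAbove ⟨p, hp, rfl⟩
        have h2 : tMin P z ≤ dotp z q := csInf_le (hcomp z).bddBelow ⟨q, hq, rfl⟩
        rw [dotp_eq] at h1 h2
        rw [dotProduct_sub]; linarith
  · apply subset_of_support (hconv.sub hconv) (by rw [sub_eq_add_neg]; exact (hc.add hc.neg).isClosed)
    rintro z _ ⟨x, hx, y, hy, rfl⟩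
    rw [Set.mem_singleton_iff] at hx
    subst hx
    obtain ⟨p, hp, hp'⟩ := (hcomp z).sSup_mem (hne.image _)
    obtain ⟨q, hq, hq'⟩ := (hcomp z).sInf_mem (hne.image _)
    refine ⟨p - q, Set.sub_mem_sub hp hq, ?_⟩
    have e : z ⬝ᵥ (p - q) = tMax P z - tMin P z := by
      rw [dotProduct_sub, ← dotp_eq, ← dotp_eq, hp', hq']; rfl
    rw [e, hh, ]
    dsimp only
    rw [hz]
    obtain ⟨g, hg, rfl⟩ := (Set.mem_fintype_sum _ _).1 hy
    rw [dotProduct_sum]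
    gcongr with i _
    obtain ⟨s, t, hs, ht, hst, hge⟩ := hg i
    rw [← hge, dotProduct_add, dotProduct_smul, dotProduct_smul]
    simp only [dotProduct_zero, smul_eq_mul, mul_zero, zero_add]
    rcases le_total (z ⬝ᵥ a i) 0 with h | h
    · exact (mul_nonpos_of_nonneg_of_nonpos ht h).trans (le_max_right _ _)
    · refine le_trans ?_ (le_max_left _ _)
      nlinarith

/-- Lemma 2.2. If `P ⊂ ℝ^d` is a convex polytope with nonempty interior
and `A(P,z)` is a constant independent of `z`, then `P - P` is a zonotope. -/
theorem diffBody_isZonotope (d : ℕ) (P : Set (Fin d → ℝ)) (hP : IsPolytope P)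
    (hint : (interior P).Nonempty) (lam : ℝ)
    (havg : ∀ z : Fin d → ℝ, z ≠ 0 → avgVert P z = lam) :
    IsZonotope (P - P) := by
  classical
  obtain ⟨s, hs⟩ := hP
  have hcomp : IsCompact P := by rw [hs]; exact s.finite_toSet.isCompact_convexHull ℝ
  have hconv : Convex ℝ P := by rw [hs]; exact convex_convexHull _ _
  have hne : P.Nonempty := hint.mono interior_subset
  have hfin : (Set.extremePoints ℝ P).Finite := by
    rw [hs]; exact s.finite_toSet.subset extremePoints_convexHull_subset
  obtain ⟨V, hV⟩ : ∃ V : Finset (Fin d → ℝ), (V : Set (Fin d → ℝ)) = Set.extremePoints ℝ P :=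
    ⟨hfin.toFinset, by simp⟩
  have hPV : P = convexHull ℝ (V : Set (Fin d → ℝ)) := by
    rw [hV]
    conv_lhs => rw [← closure_convexHull_extremePoints hcomp hconv]
    exact (hfin.isClosed_convexHull ℝ).closure_eq
  have hcont : ∀ z : Fin d → ℝ, Continuous (dotp z) := by
    intro z; unfold dotp; fun_prop
  have hci : ∀ z : Fin d → ℝ, IsCompact (dotp z '' P) := fun z => hcomp.image (hcont z)
  have hmax : ∀ z, ∀ p ∈ P, dotp z p ≤ tMax P z :=
    fun z p hp => le_csSup (hci z).bddAbove ⟨p, hp, rfl⟩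
  have hmin : ∀ z, ∀ p ∈ P, tMin P z ≤ dotp z p :=
    fun z p hp => csInf_le (hci z).bddBelow ⟨p, hp, rfl⟩
  have hlt : ∀ z : Fin d → ℝ, z ≠ 0 → tMin P z < tMax P z := by
    intro z hz
    obtain ⟨x, hx⟩ := hint
    have hev : ∀ᶠ e : ℝ in nhds 0, x + e • z ∈ P := by
      have hc : Continuous (fun e : ℝ => x + e • z) := by fun_prop
      have : Filter.Tendsto (fun e : ℝ => x + e • z) (nhds 0) (nhds x) := by
        have := hc.tendsto 0
        simpa using this
      exact this (mem_interior_iff_mem_nhds.1 hx)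
    obtain ⟨e, he, he0⟩ := ((hev.filter_mono nhdsWithin_le_nhds).and
      (self_mem_nhdsWithin : Set.Ioi (0 : ℝ) ∈ nhdsWithin 0 (Set.Ioi 0))).exists
    have h1 := hmax z _ he
    have h2 := hmin z _ (interior_subset hx)
    rw [dotp_eq] at h1 h2
    rw [dotProduct_add, dotProduct_smul, smul_eq_mul] at h1
    have h3 : 0 < z ⬝ᵥ z := by
      have h4 : 0 ≤ z ⬝ᵥ z := Finset.sum_nonneg (fun i _ => mul_self_nonneg _)
      exact lt_of_le_of_ne h4 (fun h => hz (dotProduct_self_eq_zero.1 h.symm))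
    have := mul_pos he0 h3
    linarith
  have hVab : ∀ z, ∀ v ∈ V, tMin P z ≤ dl z v ∧ dl z v ≤ tMax P z := by
    intro z v hv
    have hvP : v ∈ P := by
      have : v ∈ Set.extremePoints ℝ P := by rw [← hV]; exact hv
      exact this.1
    exact ⟨hmin z v hvP, hmax z v hvP⟩
  have hint' : ∀ z : Fin d → ℝ, z ≠ 0 → lam * (tMax P z - tMin P z) =
      ∑ p ∈ edgePairs P V, max (dl z p.2 - dl z p.1) 0 := by
    intro z hz
    have h0 := hlt z hz
    rw [← integral_count P V hV hPV (dl z) h0.le (hVab z), ← havg z hz, avgVert]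
    have : tMax P z - tMin P z ≠ 0 := by linarith
    rw [mul_comm, mul_inv_cancel_left₀ this]
    rfl
  by_cases hd : ∃ z : Fin d → ℝ, z ≠ 0
  swap
  · push Not at hd
    refine ⟨0, fun i => i.elim0, 0, ⟨fun i => i.elim0, fun i => i.elim0⟩, ?_⟩
    obtain ⟨p, hp⟩ := hne
    ext x
    rw [hd x]
    simp only [Finset.univ_eq_empty, Finset.sum_empty, add_zero, Set.mem_singleton_iff, iff_true]
    exact ⟨p, hp, p, hp, by simp⟩
  have hlam : 0 < lam := by
    obtain ⟨z, hz⟩ := hd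
    have h0 := hlt z hz
    have hI := hint' z hz
    have hnn : ∀ p ∈ edgePairs P V, 0 ≤ max (dl z p.2 - dl z p.1) 0 :=
      fun p _ => le_max_right _ _
    obtain ⟨t, ht, htV⟩ : ∃ t ∈ Set.Ioo (tMin P z) (tMax P z), t ∉ (⇑(dl z) '' (V : Set _)) := by
      have := (Set.Ioo_infinite h0).sdiff (V.finite_toSet.image (dl z))
      obtain ⟨t, ht⟩ := this.nonempty
      exact ⟨t, ht.1, ht.2⟩
    obtain ⟨hc1, hc2⟩ := count_s4 P V hV hPV (dl z) (t := t) (fun v hv h => htV ⟨v, hv, h⟩)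
    have hsec : (Set.extremePoints ℝ (P ∩ {x | dl z x = t})).Nonempty := by
      apply IsCompact.extremePoints_nonempty
      · exact hcomp.inter_right (isClosed_eq (hcont z) continuous_const)
      · obtain ⟨p, hp, hp'⟩ := (hci z).sSup_mem (hne.image _)
        obtain ⟨q, hq, hq'⟩ := (hci z).sInf_mem (hne.image _)
        have hpc := hconv.isPreconnected.intermediate_value hq hp (hcont z).continuousOn
        obtain ⟨x, hx, hx'⟩ := hpc (show t ∈ Set.Icc _ _ from
          ⟨by rw [hq']; exact ht.1.le, by rw [hp']; exact ht.2.le⟩)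
        exact ⟨x, hx, hx'⟩
    have hpos := (Set.ncard_pos hc2).2 hsec
    rw [hc1, Finset.card_pos] at hpos
    obtain ⟨p, hp⟩ := hpos
    rw [Finset.mem_filter] at hp
    have h1 : 0 < max (dl z p.2 - dl z p.1) 0 := lt_max_of_lt_left (by linarith [hp.2.1, hp.2.2])
    have h2 := Finset.sum_pos' hnn ⟨p, hp.1, h1⟩
    rw [← hI] at h2
    exact pos_of_mul_pos_left h2 (by linarith)
  have hswap : ∀ z : Fin d → ℝ, ∑ p ∈ edgePairs P V, max (dl z p.2 - dl z p.1) 0 =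
      ∑ p ∈ edgePairs P V, max (dl z p.1 - dl z p.2) 0 := by
    intro z
    have hm : ∀ p ∈ edgePairs P V, p.swap ∈ edgePairs P V := by
      intro p hp
      simp only [edgePairs, Finset.mem_filter, Finset.mem_product] at hp ⊢
      refine ⟨⟨hp.1.2, hp.1.1⟩, ?_⟩
      simp only [Prod.fst_swap, Prod.snd_swap]
      rw [segment_symm]; exact hp.2
    exact Finset.sum_bij' (fun p _ => p.swap) (fun p _ => p.swap) hm hm (by simp) (by simp)
      (by simp)
  have hrep : ∀ z : Fin d → ℝ, 2 * (tMax P z - tMin P z) =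
      ∑ p ∈ edgePairs P V, |z ⬝ᵥ (lam⁻¹ • (p.2 - p.1))| := by
    intro z
    by_cases hz : z = 0
    · subst hz
      have h0 : dotp (0 : Fin d → ℝ) '' P = {0} := by
        have : dotp (0 : Fin d → ℝ) = fun _ => 0 := by ext; simp [dotp]
        rw [this, hne.image_const]
      simp [tMax, tMin, h0]
    · have h1 := hint' z hz
      have h2 : 2 * (lam * (tMax P z - tMin P z)) =
          ∑ p ∈ edgePairs P V, |dl z p.2 - dl z p.1| := by
        rw [two_mul]
        nth_rewrite 2 [h1]
        rw [h1, hswap z]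
        nth_rewrite 1 [← hswap z]
        rw [← Finset.sum_add_distrib]
        apply Finset.sum_congr rfl
        intro p _
        rcases le_total (dl z p.2) (dl z p.1) with h | h
        · rw [abs_of_nonpos (by linarith), max_eq_right (by linarith), max_eq_left (by linarith)]
          ring
        · rw [abs_of_nonneg (by linarith), max_eq_left (by linarith), max_eq_right (by linarith)]
          ring
      have h3 : ∀ p : (Fin d → ℝ) × (Fin d → ℝ), |z ⬝ᵥ (lam⁻¹ • (p.2 - p.1))| =
          lam⁻¹ * |dl z p.2 - dl z p.1| := by
        intro p
        rw [dotProduct_smul, smul_eq_mul, abs_mul, abs_of_pos (inv_pos.2 hlam), dotProduct_sub]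
        rfl
      simp only [h3, ← Finset.mul_sum, ← h2]
      field_simp
  obtain ⟨n, a, hpi, ha⟩ := merge (fun z => 2 * (tMax P z - tMin P z))
    ⟨(edgePairs P V).card, fun i => lam⁻¹ • (((edgePairs P V).equivFin.symm i).1.2 -
      ((edgePairs P V).equivFin.symm i).1.1), by
      intro z
      simp only
      rw [hrep z, ← Finset.sum_coe_sort]
      exact (Equiv.sum_comp (edgePairs P V).equivFin.symm
        (fun p => |z ⬝ᵥ (lam⁻¹ • (p.1.2 - p.1.1))|)).symm⟩
  refine ⟨n, a, _, hpi, zono_of_support P hcomp hconv hne a (fun z => ?_)⟩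
  rw [← ha z]; ring
end
end
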